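/- There exists a family of total Boolean functions f (one for each input size, with input size growing to infinity) such that Q(f) ≥ adeg(f)^{4−o(1)}, i.e., the bounded-error quantum query complexity of f is at least the (4−o(1))-th power of its approximate polynomial degree. -/

import Mathlib

open scoped BigOperators ENNReal

namespace QC

/-! ### Inputs and partial functions -/

/-- An input assigns to each index `i` a symbol from the alphabet `Fin (α i)`. -/
abbrev Input (ι : Type) (α : ι → ℕ) := ∀ i : ι, Fin (α i)

/-- A (possibly partial) Boolean-valued query function; `none` means the input
is outside the promise/domain. -/
abbrev PartialFn (ι : Type) (α : ι → ℕ) := Input ι α → Option Bool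

/-- A total function has every input in its domain. -/
def TotalFn {ι : Type} {α : ι → ℕ} (f : PartialFn ι α) : Prop := ∀ x, f x ≠ none

/-- Classical truth value of a proposition, as a `Bool`. -/
noncomputable def ofProp (P : Prop) : Bool := @decide P (Classical.propDecidable P)

/-! ### Decision trees and classical query complexity -/

/-- Decision trees over index set `ι` with alphabets `α` and leaf labels `L`. -/
inductive DTree (ι : Type) (α : ι → ℕ) (L : Type) : Type
  | leaf : L → DTree ι α L
  | node : (i : ι) → (Fin (α i) → DTree ι α L) → DTree ι α L

namespace DTree

variable {ι : Type} {α : ι → ℕ} {L : Type}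

/-- Evaluate a decision tree on an input. -/
def eval : DTree ι α L → Input ι α → L
  | leaf b, _ => b
  | node i child, x => eval (child (x i)) x

/-- The number of queries the tree makes on a given input. -/
def cost : DTree ι α L → Input ι α → ℕ
  | leaf _, _ => 0
  | node i child, x => cost (child (x i)) x + 1

/-- The depth (worst-case number of queries) of a decision tree. -/
def depth : DTree ι α L → ℕ
  | leaf _ => 0
  | node _ child => (Finset.univ.sup fun a => depth (child a)) + 1

end DTree

variable {ι : Type} {α : ι → ℕ}

/-- Deterministic query complexity `D(f)`. -/
noncomputable def Dq (f : PartialFn ι α) : ℕ :=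
  sInf {d | ∃ T : DTree ι α (Option Bool), T.depth ≤ d ∧
    ∀ x b, f x = some b → T.eval x = some b}

/-- Bounded-error randomized query complexity `R(f)` (worst-case queries,
success probability at least 2/3 on every domain input). -/
noncomputable def Rq (f : PartialFn ι α) : ℕ :=
  sInf {d | ∃ μ : PMF (DTree ι α (Option Bool)),
    (∀ T ∈ μ.support, T.depth ≤ d) ∧
    ∀ x b, f x = some b → 2/3 ≤ μ.toOuterMeasure {T | T.eval x = some b}}

/-- Zero-error randomized query complexity `R₀(f)` (worst-case queries): the
algorithm never errs, and outputs `none` ("don't know") with probability at most 1/2. -/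
noncomputable def R0q (f : PartialFn ι α) : ℕ :=
  sInf {d | ∃ μ : PMF (DTree ι α (Option Bool)),
    (∀ T ∈ μ.support, T.depth ≤ d) ∧
    (∀ T ∈ μ.support, ∀ x b, f x = some b → T.eval x = some b ∨ T.eval x = none) ∧
    ∀ x b, f x = some b → μ.toOuterMeasure {T | T.eval x = none} ≤ 1/2}

/-- Zero-error randomized query complexity, measured by the worst-case *expected*
number of queries over domain inputs (value in `ℝ≥0∞`). -/
noncomputable def R0expq (f : PartialFn ι α) : ℝ≥0∞ :=
  sInf {c | ∃ μ : PMF (DTree ι α (Option Bool)),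
    (∀ T ∈ μ.support, ∀ x b, f x = some b → T.eval x = some b ∨ T.eval x = none) ∧
    (∀ x b, f x = some b → μ.toOuterMeasure {T | T.eval x = none} ≤ 1/2) ∧
    (∀ x b, f x = some b → ∑' T, μ T * (T.cost x : ℝ≥0∞) ≤ c)}

/-- One-sided-error randomized query complexity `R₁(f)`: accept every 1-input with
probability at least 2/3, and never accept a 0-input. -/
noncomputable def R1q (f : PartialFn ι α) : ℕ :=
  sInf {d | ∃ μ : PMF (DTree ι α (Option Bool)),
    (∀ T ∈ μ.support, T.depth ≤ d) ∧
    (∀ x, f x = some true → 2/3 ≤ μ.toOuterMeasure {T | T.eval x = some true}) ∧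
    (∀ x, f x = some false → ∀ T ∈ μ.support, T.eval x ≠ some true)}

/-! ### Quantum query complexity -/

/-- The index set of the state space of a quantum query algorithm:
a query register `Σ i, Fin (α i)` together with a workspace register `Fin W`. -/
abbrev QIdx (ι : Type) (α : ι → ℕ) (W : ℕ) := (Σ i : ι, Fin (α i)) × Fin W

variable [Fintype ι] [DecidableEq ι]

/-- The standard query oracle for input `x`: the permutation matrix sending the basis
vector `|i,a⟩|w⟩` to `|i, a + x i⟩|w⟩` (addition modulo `α i`). -/
noncomputable def oracleMatrix (W : ℕ) (x : Input ι α) :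
    Matrix (QIdx ι α W) (QIdx ι α W) ℂ :=
  Matrix.of fun j j' =>
    if j.2 = j'.2 ∧ j.1 = ⟨j'.1.1, j'.1.2 + x j'.1.1⟩ then 1 else 0

/-- The product `U_T · O · U_{T-1} · O ⋯ O · U_0` of unitaries interleaved with oracle
calls, defining a `T`-query quantum algorithm. -/
noncomputable def qProd {τ : Type} [Fintype τ] (U : ℕ → Matrix τ τ ℂ) (Ox : Matrix τ τ ℂ) :
    ℕ → Matrix τ τ ℂ
  | 0 => U 0
  | t + 1 => U (t + 1) * Ox * qProd U Ox t

/-- A quantum query algorithm: a number `T` of queries, a workspace size `W`,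
unitaries `U 0, …, U T`, a unit initial state, and a measurement assigning to each
basis state an output in `Option Bool` (`none` = "don't know"). -/
structure QAlg (ι : Type) [Fintype ι] [DecidableEq ι] (α : ι → ℕ) where
  T : ℕ
  W : ℕ
  U : ℕ → Matrix (QIdx ι α W) (QIdx ι α W) ℂ
  unitary : ∀ t, U t ∈ Matrix.unitaryGroup (QIdx ι α W) ℂ
  init : QIdx ι α W → ℂ
  init_norm : ∑ j, ‖init j‖ ^ 2 = 1
  out : QIdx ι α W → Option Bool

/-- The final state of a quantum algorithm on input `x`. -/
noncomputable def QAlg.finalState (A : QAlg ι α) (x : Input ι α) : QIdx ι α A.W → ℂ :=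
  (qProd A.U (oracleMatrix A.W x) A.T).mulVec A.init

/-- The probability that the algorithm outputs `v` on input `x`. -/
noncomputable def QAlg.outProb (A : QAlg ι α) (x : Input ι α) (v : Option Bool) : ℝ :=
  ∑ j, if A.out j = v then ‖A.finalState x j‖ ^ 2 else 0

/-- Bounded-error quantum query complexity `Q(f)`. -/
noncomputable def Qq (f : PartialFn ι α) : ℕ :=
  sInf {d | ∃ A : QAlg ι α, A.T ≤ d ∧
    ∀ x b, f x = some b → (2 : ℝ)/3 ≤ A.outProb x (some b)}

/-- Exact quantum query complexity `Q_E(f)`. -/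
noncomputable def QEq (f : PartialFn ι α) : ℕ :=
  sInf {d | ∃ A : QAlg ι α, A.T ≤ d ∧
    ∀ x b, f x = some b → A.outProb x (some b) = 1}

/-- One-sided-error quantum query complexity `Q₁(f)`. -/
noncomputable def Q1q (f : PartialFn ι α) : ℕ :=
  sInf {d | ∃ A : QAlg ι α, A.T ≤ d ∧
    (∀ x, f x = some true → (2 : ℝ)/3 ≤ A.outProb x (some true)) ∧
    (∀ x, f x = some false → A.outProb x (some true) = 0)}

/-- Zero-error quantum query complexity `Q₀(f)`: never wrong, outputs `none`
with probability at most 1/2. -/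
noncomputable def Q0q (f : PartialFn ι α) : ℕ :=
  sInf {d | ∃ A : QAlg ι α, A.T ≤ d ∧
    ∀ x b, f x = some b → A.outProb x (some !b) = 0 ∧ A.outProb x none ≤ 1/2}

/-! ### Certificate complexity -/

/-- A partial assignment `ρ` is consistent with an input `x`. -/
def Consistent (ρ : ∀ i : ι, Option (Fin (α i))) (x : Input ι α) : Prop :=
  ∀ i v, ρ i = some v → x i = v

/-- The number of fixed positions of a partial assignment. -/
noncomputable def certSize (ρ : ∀ i : ι, Option (Fin (α i))) : ℕ :=
  Nat.card {i // (ρ i).isSome}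

/-- The certificate complexity of `f` at input `x`: the least size of a partial
assignment consistent with `x` forcing the value `f x` on all domain inputs. -/
noncomputable def CxAt (f : PartialFn ι α) (x : Input ι α) : ℕ :=
  sInf {s | ∃ ρ, Consistent ρ x ∧ (∀ y, Consistent ρ y → f y = none ∨ f y = f x) ∧
    certSize ρ ≤ s}

/-- Certificate complexity `C(f)`. -/
noncomputable def Cq (f : PartialFn ι α) : ℕ :=
  sSup {s | ∃ x, f x ≠ none ∧ s = CxAt f x}

/-- One-certificate complexity `C¹(f)`. -/
noncomputable def C1q (f : PartialFn ι α) : ℕ :=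
  sSup {s | ∃ x, f x = some true ∧ s = CxAt f x}

/-! ### Polynomial degree -/

/-- Exact polynomial degree `deg(f)`: least degree of a real polynomial agreeing
with `f` (as a 0/1 function of the numerical values of the input symbols) on its domain. -/
noncomputable def degq (f : PartialFn ι α) : ℕ :=
  sInf {d | ∃ p : MvPolynomial ι ℝ, p.totalDegree ≤ d ∧
    ∀ x b, f x = some b →
      MvPolynomial.eval (fun i => ((x i : ℕ) : ℝ)) p = if b then 1 else 0}

/-- Approximate polynomial degree `adeg(f)`: least degree of a real polynomial
approximating `f` pointwise to error 1/3 on its domain. -/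
noncomputable def adegq (f : PartialFn ι α) : ℕ :=
  sInf {d | ∃ p : MvPolynomial ι ℝ, p.totalDegree ≤ d ∧
    ∀ x b, f x = some b →
      |MvPolynomial.eval (fun i => ((x i : ℕ) : ℝ)) p - if b then 1 else 0| ≤ 1/3}

end QC
/-! ### Certifying functions and cheat sheets -/

namespace QC

variable {ι : Type} {α : ι → ℕ}

/-- `φ` is a certifying function for the partial function `f`: it accepts `(x, y)`
only when `x` is in the domain of `f` and the first bit of `y` equals `f x`; every
domain input has some accepted certificate `y`; and the all-zeros `y` is never accepted. -/
def IsCertifying {k : ℕ} (hk : 0 < k) (f : PartialFn ι α)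
    (φ : Input ι α → (Fin k → Fin 2) → Bool) : Prop :=
  (∀ x y, f x = none → φ x y = false) ∧
  (∀ x y b, f x = some b → y ⟨0, hk⟩ ≠ (if b then 1 else 0) → φ x y = false) ∧
  (∀ x b, f x = some b → ∃ y, φ x y = true) ∧
  (∀ x, φ x (fun _ => 0) = false)

/-- The index set of the input to a certifying function, viewed as a query function:
the original input together with `k` certificate bits. -/
abbrev CertIdx (ι : Type) (k : ℕ) := ι ⊕ Fin k

/-- Alphabets for `CertIdx`. -/
def certAlphabet (α : ι → ℕ) (k : ℕ) : CertIdx ι k → ℕ := Sum.elim α fun _ => 2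

/-- A certifying function viewed as a total query function on input ⊕ certificate bits. -/
def certFn {k : ℕ} (φ : Input ι α → (Fin k → Fin 2) → Bool) :
    PartialFn (CertIdx ι k) (certAlphabet α k) :=
  fun z => some (φ (fun i => z (Sum.inl i)) (fun q => z (Sum.inr q)))

/-- The index set of the input to the cheat sheet version of a function: `c` copies of
the original input, followed by `2^c` cells each holding `c` certificate strings of `k` bits. -/
abbrev CSIdx (ι : Type) (c k : ℕ) := (Fin c × ι) ⊕ (Fin (2 ^ c) × Fin c × Fin k)

/-- Alphabets for `CSIdx`. -/
def csAlphabet (α : ι → ℕ) (c k : ℕ) : CSIdx ι c k → ℕ :=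
  Sum.elim (fun p => α p.2) fun _ => 2

/-- The `i`-th copy of the original input inside a cheat sheet input. -/
def csX {c k : ℕ} (z : Input (CSIdx ι c k) (csAlphabet α c k)) (i : Fin c) : Input ι α :=
  fun p => z (Sum.inl (i, p))

/-- The `i`-th certificate string in the `ℓ`-th cheat sheet cell. -/
def csY {c k : ℕ} (z : Input (CSIdx ι c k) (csAlphabet α c k)) (ℓ : Fin (2 ^ c))
    (i : Fin c) : Fin k → Fin 2 :=
  fun q => z (Sum.inr (ℓ, i, q))

/-- The number in `[2^c]` whose binary representation is the bit string `b`. -/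
def binToFin (c : ℕ) (b : Fin c → Bool) : Fin (2 ^ c) :=
  ⟨(∑ i, if b i then 2 ^ (i : ℕ) else 0) % 2 ^ c, Nat.mod_lt _ (by positivity)⟩

/-- The defining condition of the cheat sheet function: all `c` copies lie in the
domain of `f`, and the cell addressed by their `f`-values holds certificates
accepted by `φ` for each copy. -/
def CSCond {c k : ℕ} (f : PartialFn ι α) (φ : Input ι α → (Fin k → Fin 2) → Bool)
    (z : Input (CSIdx ι c k) (csAlphabet α c k)) : Prop :=
  ∃ bvec : Fin c → Bool, (∀ i, f (csX z i) = some (bvec i)) ∧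
    ∀ i, φ (csX z i) (csY z (binToFin c bvec) i) = true

/-- The cheat sheet version of `f` with respect to the certifying function `φ`,
with `c` copies of `f`. It is a total function. -/
noncomputable def cheatSheet (c : ℕ) {k : ℕ} (f : PartialFn ι α)
    (φ : Input ι α → (Fin k → Fin 2) → Bool) :
    PartialFn (CSIdx ι c k) (csAlphabet α c k) :=
  fun z => some (ofProp (CSCond f φ z))

/-! ### OR / AND compositions -/

/-- The `OR` function on `m` bits (alphabet `Fin 2`). -/
def orFn (m : ℕ) (z : Fin m → Fin 2) : Fin 2 := if ∃ j, z j = 1 then 1 else 0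

/-- The `AND` function on `m` bits (alphabet `Fin 2`). -/
def andFn (m : ℕ) (z : Fin m → Fin 2) : Fin 2 := if ∀ j, z j = 1 then 1 else 0

/-- The composition `f ∘ OR_m`. -/
def composeOr {n : ℕ} (f : PartialFn (Fin n) fun _ => 2) (m : ℕ) :
    PartialFn (Fin n × Fin m) (fun _ => 2) :=
  fun z => f fun i => orFn m fun j => z (i, j)

/-- The composition `f ∘ AND_m ∘ OR_m`. -/
def composeAndOr {n : ℕ} (f : PartialFn (Fin n) fun _ => 2) (m : ℕ) :
    PartialFn (Fin n × Fin m × Fin m) (fun _ => 2) :=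
  fun z => f fun i => andFn m fun j => orFn m fun l => z (i, j, l)

/-! ### k-SUM, Block k-sum, BKK and its recursive composition -/

/-- The `k`-SUM function on `n` numbers from `[q]`: is there a set of `k` of the
input numbers summing to `0` modulo `q`? -/
noncomputable def kSUMfn (n q k : ℕ) : PartialFn (Fin n) (fun _ => q) :=
  fun x => some (ofProp (∃ S : Finset (Fin n), S.card = k ∧
    (∑ i ∈ S, (x i : ℕ)) % q = 0))

/-- Number of ones in a block of bits. -/
def onesCount {B : ℕ} (z : Fin B → Fin 2) : ℕ := (Finset.univ.filter fun j => z j = 1).card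

/-- The number encoded in binary by a block of bits. -/
def blockVal {B : ℕ} (z : Fin B → Fin 2) : ℕ := ∑ j, if z j = 1 then 2 ^ (j : ℕ) else 0

/-- A block is balanced if it has an equal number of 0s and 1s. -/
def isBalanced {B : ℕ} (z : Fin B → Fin 2) : Prop := 2 * onesCount z = B

/-- Block `k`-sum on `nb` blocks of `B` bits each: value 1 iff there are `k` balanced
blocks whose encoded numbers sum to 0 (mod `2^B`) and every other block has at least
as many 1s as 0s. -/
noncomputable def blockKSumBool (nb B k : ℕ) (z : Fin nb × Fin B → Fin 2) : Bool :=
  ofProp (∃ S : Finset (Fin nb), S.card = k ∧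
    (∀ i ∈ S, isBalanced fun j => z (i, j)) ∧
    (∑ i ∈ S, blockVal fun j => z (i, j)) % 2 ^ B = 0 ∧
    ∀ i ∉ S, B ≤ 2 * onesCount fun j => z (i, j))

/-- The Boolean version of `k`-SUM on `m` numbers of `w` bits each (mod `2^w`). -/
noncomputable def kSumBool (m w k : ℕ) (z : Fin m × Fin w → Fin 2) : Bool :=
  ofProp (∃ S : Finset (Fin m), S.card = k ∧
    (∑ i ∈ S, blockVal fun j => z (i, j)) % 2 ^ w = 0)

/-- Block size of the outer Block `k`-sum in `BKK` on (roughly) `n` outer bits. -/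
def bkkB (n k : ℕ) : ℕ := 10 * k * Nat.log 2 n
/-- Number of blocks of the outer Block `k`-sum in `BKK`. -/
def bkkNB (n k : ℕ) : ℕ := n / bkkB n k
/-- Bits per number of the inner Boolean `k`-SUM in `BKK`. -/
def bkkW (n k : ℕ) : ℕ := k * Nat.log 2 n
/-- Number of numbers of the inner Boolean `k`-SUM in `BKK`. -/
def bkkM (n k : ℕ) : ℕ := n / bkkW n k

/-- The index set of the inputs of `BKK_{n²,k}` (one inner `k`-SUM input bit for
each outer Block `k`-sum input bit; roughly `n²` bits in total). -/
abbrev BKKIdx (n k : ℕ) := (Fin (bkkNB n k) × Fin (bkkB n k)) × (Fin (bkkM n k) × Fin (bkkW n k))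

/-- `BKK_{n²,k}`: Block `k`-sum composed with the Boolean version of `k`-SUM. -/
noncomputable def bkkBool (n k : ℕ) (z : BKKIdx n k → Fin 2) : Bool :=
  blockKSumBool (bkkNB n k) (bkkB n k) k fun ob =>
    if kSumBool (bkkM n k) (bkkW n k) k (fun p => z (ob, p)) then 1 else 0

/-- `BKK_{n²,k}` as a total query function. -/
noncomputable def BKKfn (n k : ℕ) : PartialFn (BKKIdx n k) (fun _ => 2) :=
  fun z => some (bkkBool n k z)

/-- The `d`-fold self-composition of a total Boolean function `g`: a depth-`d` tree
each of whose internal nodes is a copy of `g`; input bits are indexed by root-to-leaf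
paths `Fin d → I`. -/
noncomputable def iterFn {I : Type} (g : (I → Fin 2) → Bool) :
    (d : ℕ) → ((Fin d → I) → Fin 2) → Bool
  | 0, z => decide (z (fun i => i.elim0) = 1)
  | d + 1, z => g fun a => if iterFn g d (fun v => z (Fin.cons a v)) then 1 else 0

/-- The recursion depth used for `RecBKK`: `d = (4/25)·log n / log log n`. -/
def recD (n : ℕ) : ℕ := 4 * Nat.log 2 n / (25 * Nat.log 2 (Nat.log 2 n))

/-- The index set of the inputs of `RecBKK`. -/
abbrev RecIdx (n : ℕ) := Fin (recD n) → BKKIdx n (Nat.log 2 n)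

/-- `RecBKK`: the `recD n`-fold self-composition of `BKK` with `k = log n`. -/
noncomputable def RecBKKfn (n : ℕ) : PartialFn (RecIdx n) (fun _ => 2) :=
  fun z => some (iterFn (bkkBool n (Nat.log 2 n)) (recD n) z)

/-- The nominal input size `N = n^{2d}` of `RecBKK`. -/
def recN (n : ℕ) : ℕ := n ^ (2 * recD n)

end QC

/-! ### Bilinear operator-norm bounds -/

namespace QC

/-- The real matrix `A` has operator norm at most `b`, phrased through its bilinear form. -/
def OpBound {R C : Type} [Fintype R] [Fintype C] (A : R → C → ℝ) (b : ℝ) : Prop :=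
  ∀ (p : R → ℝ) (q : C → ℝ),
    2 * ∑ r, ∑ c, A r c * (p r * q c) ≤ b * (∑ r, p r ^ 2 + ∑ c, q c ^ 2)

namespace OpBound

variable {R C σ : Type} [Fintype R] [Fintype C] [Fintype σ] {A : R → C → ℝ} {b : ℝ}

/-- An operator-norm bound extends to vector-valued arguments. -/
lemma vec (h : OpBound A b) (p : R → σ → ℝ) (q : C → σ → ℝ) :
    2 * ∑ r, ∑ c, A r c * ∑ s, p r s * q c s ≤
      b * (∑ r, ∑ s, p r s ^ 2 + ∑ c, ∑ s, q c s ^ 2) := by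
  have h1 : ∑ r, ∑ c, A r c * ∑ s, p r s * q c s =
      ∑ s, ∑ r, ∑ c, A r c * (p r s * q c s) := by
    simp_rw [Finset.mul_sum]
    conv_rhs => rw [Finset.sum_comm]
    refine Finset.sum_congr rfl fun r _ => ?_
    rw [Finset.sum_comm]
  have h2 : ∑ r, ∑ s, p r s ^ 2 = ∑ s, ∑ r, p r s ^ 2 := Finset.sum_comm
  have h3 : ∑ c, ∑ s, q c s ^ 2 = ∑ s, ∑ c, q c s ^ 2 := Finset.sum_comm
  rw [h1, h2, h3, Finset.mul_sum, ← Finset.sum_add_distrib, Finset.mul_sum]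
  exact Finset.sum_le_sum fun s _ => h (fun r => p r s) (fun c => q c s)

lemma transpose (h : OpBound A b) : OpBound (fun c r => A r c) b := by
  intro p q
  have := h q p
  rw [Finset.sum_comm]
  simp only [mul_comm (p _) (q _)]
  linarith

lemma mono {b' : ℝ} (h : OpBound A b) (hb : b ≤ b') : OpBound A b' := fun p q =>
  (h p q).trans (mul_le_mul_of_nonneg_right hb (by positivity))

end OpBound

/-- The real part of the standard Hermitian inner product. -/
def reInner {τ : Type} [Fintype τ] (a b : τ → ℂ) : ℝ :=
  ∑ j, ((a j).re * (b j).re + (a j).im * (b j).im)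

lemma reInner_eq {τ : Type} [Fintype τ] (a b : τ → ℂ) : reInner a b = (star a ⬝ᵥ b).re := by
  simp [reInner, dotProduct]

lemma reInner_self {τ : Type} [Fintype τ] (a : τ → ℂ) : reInner a a = ∑ j, ‖a j‖ ^ 2 := by
  refine Finset.sum_congr rfl fun j _ => ?_
  rw [← Complex.normSq_eq_norm_sq, Complex.normSq_apply]

lemma reInner_unitary {τ : Type} [Fintype τ] [DecidableEq τ] {U : Matrix τ τ ℂ}
    (hU : U ∈ Matrix.unitaryGroup τ ℂ) (a b : τ → ℂ) :
    reInner (U.mulVec a) (U.mulVec b) = reInner a b := by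
  rw [reInner_eq, reInner_eq, Matrix.star_mulVec, ← Matrix.dotProduct_mulVec, Matrix.mulVec_mulVec]
  have : U.conjTranspose * U = 1 := (Matrix.mem_unitaryGroup_iff'.1 hU)
  rw [this, Matrix.one_mulVec]

lemma reInner_smul {τ : Type} [Fintype τ] (s t : ℝ) (a b : τ → ℂ) :
    reInner (fun j => (s : ℂ) * a j) (fun j => (t : ℂ) * b j) = s * t * reInner a b := by
  simp only [reInner, Finset.mul_sum]
  refine Finset.sum_congr rfl fun j _ => ?_
  simp
  ring

lemma OpBound.reInner_le {R C τ : Type} [Fintype R] [Fintype C] [Fintype τ] {A : R → C → ℝ} {b : ℝ}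
    (h : OpBound A b) (p : R → τ → ℂ) (q : C → τ → ℂ) :
    2 * ∑ r, ∑ c, A r c * reInner (p r) (q c) ≤
      b * (∑ r, reInner (p r) (p r) + ∑ c, reInner (q c) (q c)) := by
  have h1 := h.vec (fun r j => (p r j).re) (fun c j => (q c j).re)
  have h2 := h.vec (fun r j => (p r j).im) (fun c j => (q c j).im)
  simp only [reInner, Finset.sum_add_distrib, mul_add, ← pow_two] at *
  linarith

/-- The adversary-weighted inner product of two families of states. -/
def progress {R C τ : Type} [Fintype R] [Fintype C] [Fintype τ] (A : R → C → ℝ) (u : R → ℝ)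
    (v : C → ℝ) (p : R → τ → ℂ) (q : C → τ → ℂ) : ℝ :=
  ∑ r, ∑ c, A r c * (u r * v c * reInner (p r) (q c))

lemma OpBound.progress_le {R C τ : Type} [Fintype R] [Fintype C] [Fintype τ] {A : R → C → ℝ}
    {b : ℝ} (h : OpBound A b) (u : R → ℝ) (v : C → ℝ) (p : R → τ → ℂ) (q : C → τ → ℂ) :
    2 * progress A u v p q ≤
      b * (∑ r, u r ^ 2 * reInner (p r) (p r) + ∑ c, v c ^ 2 * reInner (q c) (q c)) := by
  have := h.reInner_le (fun r j => (u r : ℂ) * p r j) (fun c j => (v c : ℂ) * q c j)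
  simpa only [reInner_smul, progress, pow_two] using this

/-! ### The adversary lower bound -/

section Oracle

variable {n W : ℕ}

/-- The basis permutation implemented by the query oracle. -/
def oraclePerm (x : Fin n → Fin 2) (j : QIdx (Fin n) (fun _ => 2) W) :
    QIdx (Fin n) (fun _ => 2) W := (⟨j.1.1, j.1.2 + x j.1.1⟩, j.2)

lemma oraclePerm_involutive (x : Fin n → Fin 2) :
    Function.Involutive (oraclePerm (W := W) x) := by
  rintro ⟨⟨i, a⟩, w⟩
  have : ∀ a b : Fin 2, a + b + b = a := by decide
  simp [oraclePerm, this]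

lemma oracleMatrix_mulVec (x : Fin n → Fin 2) (a : QIdx (Fin n) (fun _ => 2) W → ℂ)
    (j : QIdx (Fin n) (fun _ => 2) W) :
    (oracleMatrix W x).mulVec a j = a (oraclePerm x j) := by
  have key : ∀ j' : QIdx (Fin n) (fun _ => 2) W,
      (j.2 = j'.2 ∧ j.1 = ⟨j'.1.1, j'.1.2 + x j'.1.1⟩) ↔ oraclePerm x j = j' := by
    intro j'
    rw [(oraclePerm_involutive x).eq_iff, Prod.ext_iff]
    simp only [oraclePerm]
    tauto
  simp only [Matrix.mulVec, dotProduct, oracleMatrix, Matrix.of_apply, key, ite_mul, one_mul,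
    zero_mul, Finset.sum_ite_eq, Finset.mem_univ, if_true]

/-- The component of a state in which position `i` is queried. -/
def queryPart (i : Fin n) (a : QIdx (Fin n) (fun _ => 2) W → ℂ) :
    QIdx (Fin n) (fun _ => 2) W → ℂ := fun j => if j.1.1 = i then a j else 0

lemma reInner_eq_sum_queryPart (a b : QIdx (Fin n) (fun _ => 2) W → ℂ) :
    reInner a b = ∑ i, reInner (queryPart i a) (queryPart i b) := by
  simp only [reInner]
  rw [Finset.sum_comm]
  refine Finset.sum_congr rfl fun j _ => ?_
  rw [Finset.sum_eq_single j.1.1]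
  · simp [queryPart]
  · intro i _ hi
    simp [queryPart, hi.symm]
  · simp

lemma reInner_queryPart_oracle {x y : Fin n → Fin 2} {i : Fin n} (h : x i = y i)
    (a b : QIdx (Fin n) (fun _ => 2) W → ℂ) :
    reInner (queryPart i ((oracleMatrix W x).mulVec a))
      (queryPart i ((oracleMatrix W y).mulVec b)) = reInner (queryPart i a) (queryPart i b) := by
  simp only [reInner]
  refine Fintype.sum_bijective _ (oraclePerm_involutive x).bijective _ _ fun j => ?_
  simp only [queryPart, oracleMatrix_mulVec]
  by_cases hj : j.1.1 = i
  · have h1 : oraclePerm y j = oraclePerm x j := by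
      unfold oraclePerm
      rw [hj, h]
    have h2 : (oraclePerm x j).1.1 = i := hj
    simp [hj, h1, h2]
  · have h2 : ¬ (oraclePerm x j).1.1 = i := hj
    simp [hj, h2]

lemma reInner_oracle (x : Fin n → Fin 2) (a b : QIdx (Fin n) (fun _ => 2) W → ℂ) :
    reInner ((oracleMatrix W x).mulVec a) ((oracleMatrix W x).mulVec b) = reInner a b := by
  rw [reInner_eq_sum_queryPart, reInner_eq_sum_queryPart a b]
  exact Finset.sum_congr rfl fun i _ => reInner_queryPart_oracle rfl a b

end Oracle

/-- The difference pattern at position `i` of a matrix indexed by two families of inputs. -/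
def diffPart {I R C β : Type} [DecidableEq β] (X : R → I → β) (Y : C → I → β) (K : R → C → ℝ)
    (i : I) : R → C → ℝ := fun r c => if X r i = Y c i then 0 else K r c

section Adversary

variable {n : ℕ} {R C : Type} [Fintype R] [Fintype C] {X : R → Fin n → Fin 2}
  {Y : C → Fin n → Fin 2} {K : R → C → ℝ} {μ : ℝ}

/-- One query changes the progress function by at most `2μ`. -/
lemma progress_oracle (hμ : ∀ i, OpBound (diffPart X Y K i) μ) {u : R → ℝ} {v : C → ℝ}
    (hu : ∑ r, u r ^ 2 = 1) (hv : ∑ c, v c ^ 2 = 1) {W : ℕ}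
    (p : R → QIdx (Fin n) (fun _ => 2) W → ℂ) (q : C → QIdx (Fin n) (fun _ => 2) W → ℂ)
    (hp : ∀ r, reInner (p r) (p r) = 1) (hq : ∀ c, reInner (q c) (q c) = 1) :
    progress K u v p q ≤ progress K u v (fun r => (oracleMatrix W (X r)).mulVec (p r))
      (fun c => (oracleMatrix W (Y c)).mulVec (q c)) + 2 * μ := by
  set p' := fun r => (oracleMatrix W (X r)).mulVec (p r) with hp'
  set q' := fun c => (oracleMatrix W (Y c)).mulVec (q c) with hq'
  have hp1 : ∀ r, reInner (p' r) (p' r) = 1 := fun r => (reInner_oracle _ _ _).trans (hp r)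
  have hq1 : ∀ c, reInner (q' c) (q' c) = 1 := fun c => (reInner_oracle _ _ _).trans (hq c)
  have hdiff : progress K u v p q - progress K u v p' q' =
      ∑ i, (progress (diffPart X Y K i) u v (fun r => queryPart i (p r))
          (fun c => queryPart i (q c)) +
        progress (diffPart X Y K i) (fun r => - u r) v (fun r => queryPart i (p' r))
          (fun c => queryPart i (q' c))) := by
    simp only [progress, ← Finset.sum_sub_distrib, ← Finset.sum_add_distrib]
    conv_rhs => rw [Finset.sum_comm]
    refine Finset.sum_congr rfl fun r _ => ?_
    conv_rhs => rw [Finset.sum_comm]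
    refine Finset.sum_congr rfl fun c _ => ?_
    rw [reInner_eq_sum_queryPart (p r), reInner_eq_sum_queryPart (p' r), Finset.mul_sum,
      Finset.mul_sum, Finset.mul_sum, Finset.mul_sum, ← Finset.sum_sub_distrib]
    refine Finset.sum_congr rfl fun i _ => ?_
    by_cases h : X r i = Y c i
    · rw [hp', hq', reInner_queryPart_oracle h]
      simp [diffPart, h]
    · simp only [diffPart, h, if_false]
      ring
  have htot : ∀ (p : R → QIdx (Fin n) (fun _ => 2) W → ℂ) (u : R → ℝ)
      (_ : ∀ r, reInner (p r) (p r) = 1) (_ : ∑ r, u r ^ 2 = 1)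
      (q : C → QIdx (Fin n) (fun _ => 2) W → ℂ) (_ : ∀ c, reInner (q c) (q c) = 1),
      ∑ i, progress (diffPart X Y K i) u v (fun r => queryPart i (p r))
          (fun c => queryPart i (q c)) ≤ μ := by
    intro p u hp hu q hq
    have h1 : ∑ i, 2 * progress (diffPart X Y K i) u v (fun r => queryPart i (p r))
          (fun c => queryPart i (q c)) ≤ ∑ i, μ *
          (∑ r, u r ^ 2 * reInner (queryPart i (p r)) (queryPart i (p r)) +
            ∑ c, v c ^ 2 * reInner (queryPart i (q c)) (queryPart i (q c))) :=
      Finset.sum_le_sum fun i _ => (hμ i).progress_le _ _ _ _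
    have h2 : ∑ i, ∑ r, u r ^ 2 * reInner (queryPart i (p r)) (queryPart i (p r)) = 1 := by
      rw [Finset.sum_comm]
      simp only [← Finset.mul_sum, ← reInner_eq_sum_queryPart, hp, mul_one, hu]
    have h3 : ∑ i, ∑ c, v c ^ 2 * reInner (queryPart i (q c)) (queryPart i (q c)) = 1 := by
      rw [Finset.sum_comm]
      simp only [← Finset.mul_sum, ← reInner_eq_sum_queryPart, hq, mul_one, hv]
    rw [← Finset.mul_sum, ← Finset.mul_sum, Finset.sum_add_distrib, h2, h3] at h1
    linarith
  have h1 := htot p u hp hu q hq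
  have h2 := htot p' (fun r => - u r) hp1 (by simpa using hu) q' hq1
  rw [Finset.sum_add_distrib] at hdiff
  linarith

/-- Any algorithm computing `f` has at least `1 / (40 μ)` queries. -/
lemma QAlg.adversary {f : PartialFn (Fin n) fun _ => 2} (hX : ∀ r, f (X r) = some true)
    (hY : ∀ c, f (Y c) = some false) (hK : OpBound K 1) {u : R → ℝ} {v : C → ℝ}
    (hu : ∑ r, u r ^ 2 = 1) (hv : ∑ c, v c ^ 2 = 1)
    (huv : ∑ r, ∑ c, K r c * (u r * v c) = 1) (hμ : ∀ i, OpBound (diffPart X Y K i) μ)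
    (B : QAlg (Fin n) fun _ => 2)
    (hB : ∀ x b, f x = some b → (2 : ℝ) / 3 ≤ B.outProb x (some b)) :
    1 ≤ 40 * μ * B.T := by
  set st : ℕ → (Fin n → Fin 2) → QIdx (Fin n) (fun _ => 2) B.W → ℂ := fun t x =>
    (qProd B.U (oracleMatrix B.W x) t).mulVec B.init with hst
  have hstep : ∀ t x, st (t + 1) x = (B.U (t + 1)).mulVec ((oracleMatrix B.W x).mulVec (st t x)) := by
    intro t x
    simp [hst, qProd, Matrix.mulVec_mulVec, Matrix.mul_assoc]
  have h0 : ∀ x y, reInner (st 0 x) (st 0 y) = 1 := by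
    intro x y
    simp only [hst, qProd]
    rw [reInner_unitary (B.unitary 0), reInner_self, B.init_norm]
  have hnorm : ∀ t x, reInner (st t x) (st t x) = 1 := by
    intro t x
    induction t with
    | zero => exact h0 x x
    | succ t ih => rw [hstep, reInner_unitary (B.unitary _), reInner_oracle, ih]
  have hprog : ∀ t : ℕ, 1 ≤ progress K u v (fun r => st t (X r)) (fun c => st t (Y c)) +
      2 * μ * t := by
    intro t
    induction t with
    | zero => simp [progress, h0, huv]
    | succ t ih =>
      have h1 := progress_oracle hμ hu hv (fun r => st t (X r)) (fun c => st t (Y c))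
        (fun r => hnorm _ _) (fun c => hnorm _ _)
      have h2 : progress K u v (fun r => st (t + 1) (X r)) (fun c => st (t + 1) (Y c)) =
          progress K u v (fun r => (oracleMatrix B.W (X r)).mulVec (st t (X r)))
            (fun c => (oracleMatrix B.W (Y c)).mulVec (st t (Y c))) := by
        simp only [progress, hstep, reInner_unitary (B.unitary _)]
      rw [h2]
      push_cast
      linarith
  set g : QIdx (Fin n) (fun _ => 2) B.W → ℝ := fun j =>
    if B.out j = some true then 5 / 6 else 6 / 5 with hg
  have hg0 : ∀ j, g j ≠ 0 := by
    intro j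
    simp only [hg]
    split_ifs <;> norm_num
  have hscale : ∀ a b : QIdx (Fin n) (fun _ => 2) B.W → ℂ,
      reInner (fun j => (g j : ℂ) * a j) (fun j => ((g j)⁻¹ : ℝ) * b j) = reInner a b := by
    intro a b
    refine Finset.sum_congr rfl fun j _ => ?_
    simp only [Complex.re_ofReal_mul, Complex.im_ofReal_mul]
    field_simp [hg0 j]
  have hout : ∀ x (s t : ℝ), ∑ j, (if B.out j = some true then s else t) * ‖st B.T x j‖ ^ 2 =
      t + (s - t) * B.outProb x (some true) := by
    intro x s t
    have h1 := hnorm B.T x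
    rw [reInner_self] at h1
    have h2 : B.outProb x (some true) =
      ∑ j, if B.out j = some true then ‖st B.T x j‖ ^ 2 else 0 := rfl
    have h3 : ∑ j, (if B.out j = some true then s else t) * ‖st B.T x j‖ ^ 2 =
        t * ∑ j, ‖st B.T x j‖ ^ 2 +
          (s - t) * ∑ j, if B.out j = some true then ‖st B.T x j‖ ^ 2 else 0 := by
      rw [Finset.mul_sum, Finset.mul_sum, ← Finset.sum_add_distrib]
      refine Finset.sum_congr rfl fun j _ => ?_
      split_ifs <;> ring
    rw [h2, h3, h1, mul_one]
  have hself : ∀ (h : QIdx (Fin n) (fun _ => 2) B.W → ℝ) (a : QIdx (Fin n) (fun _ => 2) B.W → ℂ),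
      reInner (fun j => (h j : ℂ) * a j) (fun j => (h j : ℂ) * a j) =
        ∑ j, h j ^ 2 * ‖a j‖ ^ 2 := by
    intro h a
    rw [reInner_self]
    refine Finset.sum_congr rfl fun j _ => ?_
    rw [norm_mul, mul_pow, Complex.norm_real, Real.norm_eq_abs, sq_abs]
  have hrow : ∀ r, reInner (fun j => (g j : ℂ) * st B.T (X r) j)
      (fun j => (g j : ℂ) * st B.T (X r) j) ≤ 19 / 20 := by
    intro r
    have h1 := hout (X r) ((5 / 6) ^ 2) ((6 / 5) ^ 2)
    have h2 := hB _ _ (hX r)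
    rw [hself]
    simp only [hg, ite_pow]
    rw [h1]
    linarith
  have hcol : ∀ c, reInner (fun j => ((g j)⁻¹ : ℝ) * st B.T (Y c) j)
      (fun j => ((g j)⁻¹ : ℝ) * st B.T (Y c) j) ≤ 19 / 20 := by
    intro c
    have h1 := hout (Y c) ((5 / 6 : ℝ)⁻¹ ^ 2) ((6 / 5 : ℝ)⁻¹ ^ 2)
    have h2 := hB _ _ (hY c)
    have h3 : B.outProb (Y c) (some true) + B.outProb (Y c) (some false) ≤ 1 := by
      rw [← hnorm B.T (Y c), reInner_self]
      simp only [QAlg.outProb, ← Finset.sum_add_distrib]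
      refine Finset.sum_le_sum fun j _ => ?_
      change _ ≤ ‖B.finalState (Y c) j‖ ^ 2
      rcases B.out j with _ | _ | _ <;> simp
    rw [hself]
    simp only [hg, apply_ite (fun a : ℝ => a⁻¹ ^ 2)]
    rw [h1]
    norm_num
    linarith
  have hfin := hK.progress_le u v (fun r j => (g j : ℂ) * st B.T (X r) j)
    (fun c j => ((g j)⁻¹ : ℝ) * st B.T (Y c) j)
  have h1 : progress K u v (fun r j => (g j : ℂ) * st B.T (X r) j)
    (fun c j => ((g j)⁻¹ : ℝ) * st B.T (Y c) j) =
      progress K u v (fun r => st B.T (X r)) (fun c => st B.T (Y c)) := by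
    simp only [progress, hscale]
  rw [h1] at hfin
  have h2 : ∑ r, u r ^ 2 * reInner (fun j => (g j : ℂ) * st B.T (X r) j)
      (fun j => (g j : ℂ) * st B.T (X r) j) ≤ ∑ r, u r ^ 2 * (19 / 20) :=
    Finset.sum_le_sum fun r _ => mul_le_mul_of_nonneg_left (hrow r) (sq_nonneg _)
  have h3 : ∑ c, v c ^ 2 * reInner (fun j => ((g j)⁻¹ : ℝ) * st B.T (Y c) j)
      (fun j => ((g j)⁻¹ : ℝ) * st B.T (Y c) j) ≤ ∑ c, v c ^ 2 * (19 / 20) :=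
    Finset.sum_le_sum fun c _ => mul_le_mul_of_nonneg_left (hcol c) (sq_nonneg _)
  rw [← Finset.sum_mul, hu] at h2
  rw [← Finset.sum_mul, hv] at h3
  have := hprog B.T
  linarith

end Adversary

end QC

/-! ### Reading the whole input -/

namespace QC

/-- The matrix permuting basis vectors along `π`. -/
def permMat {τ : Type} [DecidableEq τ] (π : τ → τ) : Matrix τ τ ℂ :=
  Matrix.of fun j j' => if j = π j' then 1 else 0

lemma permMat_mem_unitary {τ : Type} [Fintype τ] [DecidableEq τ] {π : τ → τ}
    (h : Function.Injective π) : permMat π ∈ Matrix.unitaryGroup τ ℂ := by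
  rw [Matrix.mem_unitaryGroup_iff']
  ext a b
  simp only [Matrix.star_eq_conjTranspose, Matrix.mul_apply, Matrix.conjTranspose_apply, permMat,
    Matrix.of_apply, Matrix.one_apply]
  simp [h.eq_iff, eq_comm]

lemma permMat_mulVec_single {τ : Type} [Fintype τ] [DecidableEq τ] (π : τ → τ) (s : τ) :
    (permMat π).mulVec (Pi.single s 1) = Pi.single (π s) 1 := by
  ext j
  simp [permMat, Pi.single_apply]

lemma oracleMatrix_mulVec_single {n W : ℕ} (x : Fin n → Fin 2)
    (s : QIdx (Fin n) (fun _ => 2) W) :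
    (oracleMatrix W x).mulVec (Pi.single s 1) = Pi.single (oraclePerm x s) 1 := by
  ext j
  rw [oracleMatrix_mulVec]
  simp only [Pi.single_apply, (oraclePerm_involutive x).eq_iff]

section Reader

variable {m : ℕ} {W : ℕ} (e : Fin W ≃ (Fin (m + 1) → Fin 2))

/-- Move the answer of the last query into memory and advance to the next position. -/
def readStep (j : QIdx (Fin (m + 1)) (fun _ => 2) W) : QIdx (Fin (m + 1)) (fun _ => 2) W :=
  (⟨j.1.1 + 1, e j.2 j.1.1⟩, e.symm (Function.update (e j.2) j.1.1 j.1.2))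

lemma readStep_injective : Function.Injective (readStep e) := by
  rintro ⟨⟨i, a⟩, w⟩ ⟨⟨i', a'⟩, w'⟩ h
  simp only [readStep, Prod.mk.injEq, Sigma.mk.injEq, add_left_inj, EmbeddingLike.apply_eq_iff_eq]
    at h
  obtain ⟨⟨rfl, h1⟩, h2⟩ := h
  have h1 := eq_of_heq h1
  have h3 : a = a' := by simpa using congrFun h2 i
  have h4 : e w = e w' := by
    funext j
    by_cases hj : j = i
    · rw [hj, h1]
    · simpa [hj] using congrFun h2 j
  rw [h3, e.injective h4]

/-- The basis state reached after `t` queries. -/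
def readState (x : Fin (m + 1) → Fin 2) (t : ℕ) : QIdx (Fin (m + 1)) (fun _ => 2) W :=
  (⟨Fin.ofNat (m + 1) t, 0⟩, e.symm fun j => if j.val < t then x j else 0)

lemma readStep_readState (x : Fin (m + 1) → Fin 2) {t : ℕ} (ht : t < m + 1) :
    readStep e (oraclePerm x (readState e x t)) = readState e x (t + 1) := by
  have hval : (Fin.ofNat (m + 1) t).val = t := Nat.mod_eq_of_lt ht
  have hsucc : Fin.ofNat (m + 1) (t + 1) = Fin.ofNat (m + 1) t + 1 := by
    apply Fin.ext
    simp [Fin.val_add]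
  have h1 : (fun j : Fin (m + 1) => if j.val < t + 1 then x j else 0) =
      Function.update (fun j : Fin (m + 1) => if j.val < t then x j else 0) (Fin.ofNat (m + 1) t)
        (x (Fin.ofNat (m + 1) t)) := by
    funext j
    by_cases hj : j = Fin.ofNat (m + 1) t
    · rw [hj, Function.update_self, hval, if_pos (Nat.lt_succ_self t)]
    · have : j.val ≠ t := fun h => hj (Fin.ext (by rw [h, hval]))
      rw [Function.update_of_ne hj]
      simp only [Nat.lt_succ_iff_lt_or_eq, this, or_false]
  simp only [readStep, oraclePerm, readState, Equiv.apply_symm_apply, hval, lt_irrefl, if_false,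
    zero_add, h1, hsucc]

end Reader

lemma exists_QAlg {m : ℕ} (f : PartialFn (Fin (m + 1)) fun _ => 2) :
    ∃ A : QAlg (Fin (m + 1)) fun _ => 2,
      ∀ x b, f x = some b → (2 : ℝ) / 3 ≤ A.outProb x (some b) := by
  let e : Fin (Fintype.card (Fin (m + 1) → Fin 2)) ≃ (Fin (m + 1) → Fin 2) :=
    (Fintype.equivFin _).symm
  refine ⟨⟨m + 1, _, fun t => if t = 0 then 1 else permMat (readStep e), ?_,
    Pi.single (readState e 0 0) 1, ?_, fun j => f (e j.2)⟩, ?_⟩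
  · intro t
    split_ifs
    · exact one_mem _
    · exact permMat_mem_unitary (readStep_injective e)
  · simp [Pi.single_apply, apply_ite]
  · intro x b hb
    have key : ∀ t ≤ m + 1, (qProd (fun t => if t = 0 then 1 else permMat (readStep e))
        (oracleMatrix _ x) t).mulVec (Pi.single (readState e 0 0) 1) =
          Pi.single (readState e x t) 1 := by
      intro t
      induction t with
      | zero =>
        intro _
        simp only [qProd, if_true, Matrix.one_mulVec]
        simp [readState]
      | succ t ih =>
        intro ht
        rw [qProd, Matrix.mul_assoc, ← Matrix.mulVec_mulVec, ← Matrix.mulVec_mulVec,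
          ih (by omega), oracleMatrix_mulVec_single, if_neg (by omega), permMat_mulVec_single,
          readStep_readState e x (by omega)]
    have hx : e (readState e x (m + 1)).2 = x := by
      simp only [readState, Equiv.apply_symm_apply, Fin.is_lt, if_true]
    have h1 : (1 : ℝ) ≤ QAlg.outProb ⟨m + 1, _, fun t => if t = 0 then 1 else permMat (readStep e), by
        intro t
        split_ifs
        · exact one_mem _
        · exact permMat_mem_unitary (readStep_injective e),
        Pi.single (readState e 0 0) 1, by simp [Pi.single_apply, apply_ite],
        fun j => f (e j.2)⟩ x (some b) := by
      unfold QAlg.outProb QAlg.finalState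
      simp only [key (m + 1) le_rfl]
      refine le_trans ?_ (Finset.single_le_sum (f := fun j => if f (e j.2) = some b then
        ‖(Pi.single (readState e x (m + 1)) 1 : _ → ℂ) j‖ ^ 2 else 0) ?_
          (Finset.mem_univ (readState e x (m + 1))))
      · simp [hx, hb]
      · intro j _
        split_ifs <;> positivity
    linarith

/-- The adversary lower bound on quantum query complexity. -/
lemma one_le_Qq {n : ℕ} (hn : n ≠ 0) {R C : Type} [Fintype R] [Fintype C]
    {X : R → Fin n → Fin 2} {Y : C → Fin n → Fin 2} {K : R → C → ℝ} {μ : ℝ}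
    {f : PartialFn (Fin n) fun _ => 2} (hX : ∀ r, f (X r) = some true)
    (hY : ∀ c, f (Y c) = some false) (hK : OpBound K 1) {u : R → ℝ} {v : C → ℝ}
    (hu : ∑ r, u r ^ 2 = 1) (hv : ∑ c, v c ^ 2 = 1)
    (huv : ∑ r, ∑ c, K r c * (u r * v c) = 1) (hμ : ∀ i, OpBound (diffPart X Y K i) μ)
    (hμ0 : 0 ≤ μ) : 1 ≤ 40 * μ * Qq f := by
  obtain ⟨m, rfl⟩ := Nat.exists_eq_succ_of_ne_zero hn
  obtain ⟨A, hA⟩ := exists_QAlg f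
  have hne : {d | ∃ A : QAlg (Fin (m + 1)) (fun _ => 2), A.T ≤ d ∧
      ∀ x b, f x = some b → (2 : ℝ) / 3 ≤ A.outProb x (some b)}.Nonempty := ⟨A.T, A, le_rfl, hA⟩
  obtain ⟨B, hB1, hB2⟩ := Nat.sInf_mem hne
  refine (B.adversary hX hY hK hu hv huv hμ hB2).trans ?_
  exact mul_le_mul_of_nonneg_left (Nat.cast_le.2 hB1) (by positivity)

end QC

/-! ### Adversary systems and their composition -/

namespace QC

lemma prod_sum_fun {J : Type} [Fintype J] [DecidableEq J] {σ : J → Type} [∀ j, Fintype (σ j)]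
    (f : ∀ j, σ j → ℝ) : ∏ j, ∑ s, f j s = ∑ s : ∀ j, σ j, ∏ j, f j (s j) := by
  rw [Finset.prod_univ_sum, Fintype.piFinset_univ]

section Block

variable {A : Type} [Fintype A] [DecidableEq A]

/-- The entries of the block matrix `(1, K; Kᵀ, 1)`. -/
def blk (K : A → A → ℝ) (b : Bool) (a : A) (b' : Bool) (a' : A) : ℝ :=
  if b = b' then (if a = a' then 1 else 0) else if b then K a a' else K a' a

lemma exists_gram {K : A → A → ℝ} (hK : OpBound K 1) :
    ∃ (m : ℕ) (φ : Bool → A → Fin m → ℝ),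
      ∀ b a b' a', ∑ s, φ b a s * φ b' a' s = blk K b a b' a' := by
  have hpsd : (Matrix.of fun i j : Bool × A => blk K i.1 i.2 j.1 j.2).PosSemidef := by
    refine Matrix.PosSemidef.of_dotProduct_mulVec_nonneg ?_ ?_
    · ext ⟨b, a⟩ ⟨b', a'⟩
      cases b <;> cases b' <;> simp [blk, @eq_comm _ a a']
    · intro z
      have h := hK (fun a => - z (true, a)) (fun a => z (false, a))
      have e : star z ⬝ᵥ (Matrix.of fun i j : Bool × A => blk K i.1 i.2 j.1 j.2).mulVec z =
          ∑ a, z (true, a) ^ 2 + ∑ a, z (false, a) ^ 2 +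
            2 * ∑ a, ∑ a', K a a' * (z (true, a) * z (false, a')) := by
        have e1 : ∑ a, ∑ a', z (false, a) * (K a' a * z (true, a')) =
            ∑ a, ∑ a', K a a' * (z (true, a) * z (false, a')) := by
          rw [Finset.sum_comm]
          exact Finset.sum_congr rfl fun a _ => Finset.sum_congr rfl fun a' _ => by ring
        have e2 : ∑ a, ∑ a', z (true, a) * (K a a' * z (false, a')) =
            ∑ a, ∑ a', K a a' * (z (true, a) * z (false, a')) :=
          Finset.sum_congr rfl fun a _ => Finset.sum_congr rfl fun a' _ => by ring
        simp only [dotProduct, Matrix.mulVec, Matrix.of_apply, Fintype.sum_prod_type,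
          Fintype.sum_bool, blk, Pi.star_apply, star_trivial, mul_add, Finset.sum_add_distrib]
        simp only [if_true, reduceCtorEq, if_false, ite_mul, one_mul, zero_mul, Finset.mul_sum,
          Bool.false_eq_true, Finset.sum_ite_eq, Finset.mem_univ]
        rw [e1, e2]
        simp only [pow_two]
        simp only [← Finset.mul_sum]
        ring
      rw [e]
      have h1 : ∑ a, ∑ a', K a a' * (-z (true, a) * z (false, a')) =
          - ∑ a, ∑ a', K a a' * (z (true, a) * z (false, a')) := by
        simp only [← Finset.sum_neg_distrib]
        exact Finset.sum_congr rfl fun a _ => Finset.sum_congr rfl fun a' _ => by ring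
      rw [h1] at h
      simp only [neg_sq] at h
      linarith
  obtain ⟨m, v, hv⟩ := Matrix.posSemidef_iff_eq_sum_vecMulVec.1 hpsd
  refine ⟨m, fun b a s => v s (b, a), fun b a b' a' => ?_⟩
  have := congrFun (congrFun hv (b, a)) (b', a')
  rw [Matrix.sum_apply] at this
  simpa [Matrix.vecMulVec_apply] using this.symm

variable {J R C : Type} [Fintype J] [DecidableEq J] [Fintype R] [Fintype C]

/-- Composing a matrix with block matrices of norm one at every position keeps its norm. -/
lemma OpBound.comp {B : R → C → ℝ} {β : ℝ} (hB : OpBound B β) (X : R → J → Bool)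
    (Y : C → J → Bool) {K : J → A → A → ℝ} (hK : ∀ j, OpBound (K j) 1) :
    OpBound (fun (r : R × (J → A)) (c : C × (J → A)) =>
      B r.1 c.1 * ∏ j, blk (K j) (X r.1 j) (r.2 j) (Y c.1 j) (c.2 j)) β := by
  choose m φ hφ using fun j => exists_gram (hK j)
  have hin : ∀ (b b' : J → Bool) (p q : (J → A) → ℝ),
      ∑ s : ∀ j, Fin (m j), (∑ ξ, p ξ * ∏ j, φ j (b j) (ξ j) (s j)) *
        (∑ η, q η * ∏ j, φ j (b' j) (η j) (s j)) =
      ∑ ξ, ∑ η, p ξ * q η * ∏ j, blk (K j) (b j) (ξ j) (b' j) (η j) := by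
    intro b b' p q
    simp only [Finset.sum_mul_sum]
    rw [Finset.sum_comm]
    refine Finset.sum_congr rfl fun ξ _ => ?_
    rw [Finset.sum_comm]
    refine Finset.sum_congr rfl fun η _ => ?_
    simp only [← hφ]
    rw [prod_sum_fun, Finset.mul_sum]
    refine Finset.sum_congr rfl fun s _ => ?_
    rw [Finset.prod_mul_distrib]
    ring
  have hnorm : ∀ (b : J → Bool) (p : (J → A) → ℝ),
      ∑ s : ∀ j, Fin (m j), (∑ ξ, p ξ * ∏ j, φ j (b j) (ξ j) (s j)) ^ 2 = ∑ ξ, p ξ ^ 2 := by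
    intro b p
    simp only [pow_two, hin]
    refine Finset.sum_congr rfl fun ξ _ => ?_
    rw [Finset.sum_eq_single ξ]
    · simp [blk]
    · intro η _ hη
      obtain ⟨j, hj⟩ := Function.ne_iff.1 hη
      rw [Finset.prod_eq_zero (Finset.mem_univ j), mul_zero]
      simp [blk, hj.symm]
    · simp
  intro p q
  have h := hB.vec (fun r (s : ∀ j, Fin (m j)) => ∑ ξ, p (r, ξ) * ∏ j, φ j (X r j) (ξ j) (s j))
    (fun c (s : ∀ j, Fin (m j)) => ∑ η, q (c, η) * ∏ j, φ j (Y c j) (η j) (s j))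
  simp only [hnorm, hin] at h
  simp only [Fintype.sum_prod_type]
  refine le_trans (le_of_eq ?_) h
  congr 1
  refine Finset.sum_congr rfl fun r _ => ?_
  rw [Finset.sum_comm]
  refine Finset.sum_congr rfl fun c _ => ?_
  simp only [Finset.mul_sum]
  refine Finset.sum_congr rfl fun ξ _ => Finset.sum_congr rfl fun η _ => ?_
  ring

end Block

/-- A normalized adversary matrix between two families of inputs, with value `L`. -/
structure AdvSys (I : Type) (L : ℝ) where
  A : Type
  [fin : Fintype A]
  [dec : DecidableEq A]
  X : Bool → A → I → Bool
  K : A → A → ℝ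
  w : Bool → A → ℝ
  bound : OpBound K 1
  norm : ∀ b, ∑ a, w b a ^ 2 = 1
  attained : ∑ a, ∑ a', K a a' * (w true a * w false a') = 1
  diff : ∀ i, OpBound (diffPart (X true) (X false) K i) (1 / L)

attribute [instance] AdvSys.fin AdvSys.dec

namespace AdvSys

variable {I : Type} {L : ℝ} (S : AdvSys I L)

/-- The kernel obtained by composing an outer matrix with an adversary system. -/
def comp {J R C : Type} [Fintype J] (B : R → C → ℝ) (X : R → J → Bool) (Y : C → J → Bool)
    (r : R × (J → S.A)) (c : C × (J → S.A)) : ℝ :=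
  B r.1 c.1 * ∏ j, blk S.K (X r.1 j) (r.2 j) (Y c.1 j) (c.2 j)

variable {J R C : Type} [Fintype J] [Fintype R] [Fintype C]
  {B : R → C → ℝ} {X : R → J → Bool} {Y : C → J → Bool}

lemma comp_bound [DecidableEq J] {β : ℝ} (hB : OpBound B β) : OpBound (S.comp B X Y) β :=
  hB.comp X Y fun _ => S.bound

lemma comp_diff [DecidableEq J] (hL : 0 < L) {β : ℝ} {j : J} (hB : OpBound (diffPart X Y B j) β)
    (i : I) : OpBound (fun (r : R × (J → S.A)) (c : C × (J → S.A)) =>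
      if S.X (X r.1 j) (r.2 j) i = S.X (Y c.1 j) (c.2 j) i then 0 else S.comp B X Y r c)
      (β / L) := by
  have hdiff : OpBound (fun a a' => L * diffPart (S.X true) (S.X false) S.K i a a') 1 := by
    intro p q
    have h := S.diff i p q
    simp only [mul_assoc, ← Finset.mul_sum]
    rw [one_div_mul_eq_div, le_div_iff₀ hL] at h
    linarith
  have h := hB.comp X Y (K := fun j' => if j' = j then
    fun a a' => L * diffPart (S.X true) (S.X false) S.K i a a' else S.K) (by
      intro j'
      split_ifs
      · exact hdiff
      · exact S.bound)
  intro p q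
  have h' := h p q
  have e : ∀ (r : R × (J → S.A)) (c : C × (J → S.A)),
      diffPart X Y B j r.1 c.1 * ∏ j', blk (if j' = j then
        fun a a' => L * diffPart (S.X true) (S.X false) S.K i a a' else S.K)
          (X r.1 j') (r.2 j') (Y c.1 j') (c.2 j') =
      L * (if S.X (X r.1 j) (r.2 j) i = S.X (Y c.1 j) (c.2 j) i then 0 else S.comp B X Y r c) := by
    intro r c
    unfold comp
    rw [← Finset.mul_prod_erase _ _ (Finset.mem_univ j),
      ← Finset.mul_prod_erase Finset.univ (fun j => blk S.K (X r.1 j) (r.2 j) (Y c.1 j) (c.2 j))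
        (Finset.mem_univ j)]
    have e2 : ∏ x ∈ Finset.univ.erase j, blk (if x = j then
        fun a a' => L * diffPart (S.X true) (S.X false) S.K i a a' else S.K)
          (X r.1 x) (r.2 x) (Y c.1 x) (c.2 x) =
        ∏ x ∈ Finset.univ.erase j, blk S.K (X r.1 x) (r.2 x) (Y c.1 x) (c.2 x) := by
      refine Finset.prod_congr rfl fun x hx => ?_
      rw [if_neg (Finset.ne_of_mem_erase hx)]
    rw [e2, if_pos rfl]
    generalize ∏ x ∈ Finset.univ.erase j, blk S.K (X r.1 x) (r.2 x) (Y c.1 x) (c.2 x) = P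
    unfold diffPart blk
    by_cases hb : X r.1 j = Y c.1 j
    · rw [hb]
      by_cases ha : r.2 j = c.2 j
      · simp [ha]
      · simp [ha]
    · cases h1 : X r.1 j
      · have h2 : Y c.1 j = true := by
          rw [h1] at hb
          simpa using Ne.symm hb
        simp only [h2, Bool.false_eq_true, if_false]
        by_cases h3 : S.X true (c.2 j) i = S.X false (r.2 j) i
        · simp [h3]
        · simp only [h3, Ne.symm h3, if_false]
          ring
      · have h2 : Y c.1 j = false := by
          rw [h1] at hb
          simpa using Ne.symm hb
        simp only [h2, Bool.true_eq_false, if_false, if_true]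
        by_cases h3 : S.X true (r.2 j) i = S.X false (c.2 j) i
        · simp [h3]
        · simp only [h3, if_false]
          ring
  simp only [e, mul_assoc, ← Finset.mul_sum] at h'
  rw [div_mul_eq_mul_div, le_div_iff₀ hL]
  linarith

/-- The composed test vector. -/
def vec (b : R → J → Bool) (u : R → ℝ) (r : R × (J → S.A)) : ℝ :=
  u r.1 * ∏ j, S.w (b r.1 j) (r.2 j)

lemma sum_vec_sq [DecidableEq J] (b : R → J → Bool) {u : R → ℝ} (hu : ∑ r, u r ^ 2 = 1) :
    ∑ r, S.vec b u r ^ 2 = 1 := by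
  rw [← hu, Fintype.sum_prod_type]
  refine Finset.sum_congr rfl fun r _ => ?_
  simp only [vec, mul_pow, ← Finset.mul_sum, ← Finset.prod_pow]
  rw [← prod_sum_fun (fun j a => S.w (b r j) a ^ 2)]
  simp [S.norm]

lemma sum_blk (b b' : Bool) : ∑ a, ∑ a', blk S.K b a b' a' * (S.w b a * S.w b' a') = 1 := by
  by_cases h : b = b'
  · rw [← h, ← S.norm b]
    refine Finset.sum_congr rfl fun a _ => ?_
    simp [blk, pow_two]
  · rw [← S.attained]
    cases b
    · have : b' = true := by simpa using Ne.symm h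
      rw [this, Finset.sum_comm]
      refine Finset.sum_congr rfl fun a _ => Finset.sum_congr rfl fun a' _ => ?_
      simp [blk, mul_comm (S.w true a)]
    · have : b' = false := by simpa using Ne.symm h
      rw [this]
      simp [blk]

lemma comp_attained [DecidableEq J] {u : R → ℝ} {v : C → ℝ}
    (huv : ∑ r, ∑ c, B r c * (u r * v c) = 1) :
    ∑ r, ∑ c, S.comp B X Y r c * (S.vec X u r * S.vec Y v c) = 1 := by
  rw [← huv, Fintype.sum_prod_type]
  refine Finset.sum_congr rfl fun r _ => ?_
  simp only [Fintype.sum_prod_type]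
  rw [Finset.sum_comm]
  refine Finset.sum_congr rfl fun c _ => ?_
  have e : ∑ ξ : J → S.A, ∑ η : J → S.A, ∏ j, (blk S.K (X r j) (ξ j) (Y c j) (η j) *
      (S.w (X r j) (ξ j) * S.w (Y c j) (η j))) = 1 := by
    rw [← Finset.prod_const_one (s := (Finset.univ : Finset J)),
      Finset.prod_congr rfl fun j _ => (S.sum_blk (X r j) (Y c j)).symm, prod_sum_fun]
    refine Finset.sum_congr rfl fun ξ _ => ?_
    rw [prod_sum_fun]
  rw [← mul_one (B r c * _), ← e, Finset.mul_sum]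
  refine Finset.sum_congr rfl fun ξ _ => ?_
  rw [Finset.mul_sum]
  refine Finset.sum_congr rfl fun η _ => ?_
  simp only [comp, vec, Finset.prod_mul_distrib]
  ring

end AdvSys

/-- The Boolean function `F` has an adversary system of value `L`. -/
def HasAdv {I : Type} (F : (I → Bool) → Bool) (L : ℝ) : Prop :=
  ∃ S : AdvSys I L, ∀ b a, F (S.X b a) = b

/-- Block composition of Boolean functions. -/
def bcomp {J I : Type} (G : (J → Bool) → Bool) (F : (I → Bool) → Bool) (z : J × I → Bool) : Bool :=
  G fun j => F fun i => z (j, i)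

lemma HasAdv.bcomp {J I : Type} [Fintype J] [DecidableEq J] {G : (J → Bool) → Bool}
    {F : (I → Bool) → Bool} {L L' : ℝ} (hG : HasAdv G L) (hF : HasAdv F L') (hL' : 0 < L') :
    HasAdv (bcomp G F) (L * L') := by
  obtain ⟨S, hS⟩ := hG
  obtain ⟨S', hS'⟩ := hF
  refine ⟨⟨S.A × (J → S'.A), fun b a ji => S'.X (S.X b a.1 ji.1) (a.2 ji.1) ji.2,
    S'.comp S.K (S.X true) (S.X false), fun b => S'.vec (S.X b) (S.w b), S'.comp_bound S.bound,
    fun b => S'.sum_vec_sq _ (S.norm b), S'.comp_attained S.attained, ?_⟩, ?_⟩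
  · rintro ⟨j, i⟩
    have := S'.comp_diff hL' (S.diff j) i
    rw [div_div] at this
    exact this
  · intro b a
    simp only [QC.bcomp, hS', hS]

lemma HasAdv.mono {I : Type} {F : (I → Bool) → Bool} {L L' : ℝ} (h : HasAdv F L) (h0 : 0 < L')
    (hL : L' ≤ L) : HasAdv F L' := by
  obtain ⟨S, hS⟩ := h
  exact ⟨⟨S.A, S.X, S.K, S.w, S.bound, S.norm, S.attained, fun i =>
    (S.diff i).mono (one_div_le_one_div_of_le h0 hL)⟩, hS⟩

lemma hasAdv_id : HasAdv (fun z : Unit → Bool => z ()) 1 := by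
  refine ⟨⟨Unit, fun b _ _ => b, fun _ _ => 1, fun _ _ => 1, ?_, ?_, ?_, ?_⟩, ?_⟩
  · intro p q
    simp
    nlinarith [sq_nonneg (p () - q ())]
  · simp
  · simp
  · intro i p q
    simp [diffPart]
    nlinarith [sq_nonneg (p () - q ())]
  · simp

end QC

/-! ### Normalizing an adversary matrix -/

namespace QC

section Normalize

variable {R C : Type} [Fintype R] [Fintype C]

lemma OpBound.smul {A : R → C → ℝ} {b : ℝ} (h : OpBound A b) {s : ℝ} (hs : 0 ≤ s) :
    OpBound (fun r c => s * A r c) (s * b) := by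
  intro p q
  have h1 := mul_le_mul_of_nonneg_left (h p q) hs
  simp only [mul_assoc, ← Finset.mul_sum] at h1 ⊢
  linarith

/-- The operator norm of a matrix is attained. -/
lemma exists_opBound_attained (Γ : R → C → ℝ) {p₀ : R → ℝ} {q₀ : C → ℝ}
    (hp₀ : ∑ r, p₀ r ^ 2 = 1) (hq₀ : ∑ c, q₀ c ^ 2 = 1)
    (h0 : 0 ≤ ∑ r, ∑ c, Γ r c * (p₀ r * q₀ c)) :
    ∃ (p : R → ℝ) (q : C → ℝ), ∑ r, p r ^ 2 = 1 ∧ ∑ c, q c ^ 2 = 1 ∧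
      ∑ r, ∑ c, Γ r c * (p₀ r * q₀ c) ≤ ∑ r, ∑ c, Γ r c * (p r * q c) ∧
      OpBound Γ (∑ r, ∑ c, Γ r c * (p r * q c)) := by
  let S : Set ((R → ℝ) × (C → ℝ)) := {z | ∑ r, z.1 r ^ 2 = 1 ∧ ∑ c, z.2 c ^ 2 = 1}
  have hle : ∀ {T : Type} [Fintype T] (z : T → ℝ), ∑ t, z t ^ 2 = 1 → ‖z‖ ≤ 1 := by
    intro T _ z hz
    rw [pi_norm_le_iff_of_nonneg zero_le_one]
    intro t
    have : z t ^ 2 ≤ 1 := hz ▸ Finset.single_le_sum (f := fun t => z t ^ 2)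
      (fun _ _ => sq_nonneg _) (Finset.mem_univ t)
    rw [Real.norm_eq_abs]
    exact (sq_le_one_iff_abs_le_one _).1 this
  have hS : IsCompact S := by
    refine Metric.isCompact_of_isClosed_isBounded ?_ ?_
    · exact (isClosed_eq (by fun_prop) (by fun_prop)).inter
        (isClosed_eq (by fun_prop) (by fun_prop))
    · refine (Metric.isBounded_closedBall (x := (0 : (R → ℝ) × (C → ℝ))) (r := 1)).subset ?_
      rintro z ⟨h1, h2⟩
      rw [mem_closedBall_zero_iff, Prod.norm_def]
      exact max_le (hle _ h1) (hle _ h2)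
  obtain ⟨⟨p, q⟩, ⟨hp, hq⟩, hmax⟩ := hS.exists_isMaxOn ⟨(p₀, q₀), hp₀, hq₀⟩
    (f := fun z => ∑ r, ∑ c, Γ r c * (z.1 r * z.2 c)) (by fun_prop)
  have hge := hmax (show (p₀, q₀) ∈ S from ⟨hp₀, hq₀⟩)
  simp only [Set.mem_ofPred_eq] at hge hp hq
  refine ⟨p, q, hp, hq, hge, ?_⟩
  set lam := ∑ r, ∑ c, Γ r c * (p r * q c) with hlam
  have hlam0 : 0 ≤ lam := h0.trans hge
  intro a b
  by_cases ha : ∑ r, a r ^ 2 = 0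
  · have ha' : ∀ r, a r = 0 := by
      intro r
      have := (Finset.sum_eq_zero_iff_of_nonneg (fun r _ => sq_nonneg (a r))).1 ha r
        (Finset.mem_univ r)
      exact pow_eq_zero_iff two_ne_zero |>.1 this
    simp only [ha', zero_mul, mul_zero, Finset.sum_const_zero]
    positivity
  by_cases hb : ∑ c, b c ^ 2 = 0
  · have hb' : ∀ c, b c = 0 := by
      intro c
      have := (Finset.sum_eq_zero_iff_of_nonneg (fun c _ => sq_nonneg (b c))).1 hb c
        (Finset.mem_univ c)
      exact pow_eq_zero_iff two_ne_zero |>.1 this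
    simp only [hb', mul_zero, Finset.sum_const_zero]
    positivity
  have ha0 : 0 < ∑ r, a r ^ 2 := lt_of_le_of_ne (by positivity) (Ne.symm ha)
  have hb0 : 0 < ∑ c, b c ^ 2 := lt_of_le_of_ne (by positivity) (Ne.symm hb)
  set s := Real.sqrt (∑ r, a r ^ 2) with hs
  set t := Real.sqrt (∑ c, b c ^ 2) with ht
  have hs0 : 0 < s := Real.sqrt_pos.2 ha0
  have ht0 : 0 < t := Real.sqrt_pos.2 hb0
  have hs2 : s ^ 2 = ∑ r, a r ^ 2 := Real.sq_sqrt ha0.le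
  have ht2 : t ^ 2 = ∑ c, b c ^ 2 := Real.sq_sqrt hb0.le
  have hmem : ((fun r => s⁻¹ * a r), (fun c => t⁻¹ * b c)) ∈ S := by
    constructor
    · simp only [mul_pow, ← Finset.mul_sum, ← hs2]
      field_simp
    · simp only [mul_pow, ← Finset.mul_sum, ← ht2]
      field_simp
  have h1 := hmax hmem
  simp only [Set.mem_ofPred_eq, ← hlam] at h1
  have h2 : ∑ r, ∑ c, Γ r c * (s⁻¹ * a r * (t⁻¹ * b c)) =
      (s * t)⁻¹ * ∑ r, ∑ c, Γ r c * (a r * b c) := by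
    simp only [Finset.mul_sum]
    refine Finset.sum_congr rfl fun r _ => Finset.sum_congr rfl fun c _ => ?_
    rw [mul_inv]
    ring
  rw [h2, inv_mul_le_iff₀ (by positivity)] at h1
  rw [← hs2, ← ht2]
  nlinarith [mul_nonneg hlam0 (sq_nonneg (s - t))]

/-- Any matrix between positive and negative inputs yields an adversary system. -/
lemma HasAdv.of_matrix {I : Type} {F : (I → Bool) → Bool} {X : R → I → Bool} {Y : C → I → Bool}
    (hX : ∀ r, F (X r) = true) (hY : ∀ c, F (Y c) = false) (Γ : R → C → ℝ) {p₀ : R → ℝ}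
    {q₀ : C → ℝ} (hp₀ : ∑ r, p₀ r ^ 2 = 1) (hq₀ : ∑ c, q₀ c ^ 2 = 1) {l μ : ℝ} (hl : 0 < l)
    (hμ0 : 0 < μ) (hΓ : l ≤ ∑ r, ∑ c, Γ r c * (p₀ r * q₀ c))
    (hμ : ∀ i, OpBound (diffPart X Y Γ i) μ) : HasAdv F (l / μ) := by
  classical
  obtain ⟨p, q, hp, hq, hge, hb⟩ := exists_opBound_attained Γ hp₀ hq₀ (hl.le.trans hΓ)
  set lam := ∑ r, ∑ c, Γ r c * (p r * q c) with hlam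
  have hlam0 : 0 < lam := hl.trans_le (hΓ.trans hge)
  have hR : Nonempty R := by
    by_contra h
    rw [not_nonempty_iff] at h
    simp at hp
  have hC : Nonempty C := by
    by_contra h
    rw [not_nonempty_iff] at h
    simp at hq
  obtain ⟨r₀⟩ := hR
  obtain ⟨c₀⟩ := hC
  have hlift : ∀ {Λ : R → C → ℝ} {β : ℝ}, OpBound Λ β → 0 ≤ β →
      OpBound (fun (a a' : R ⊕ C) => Sum.elim (fun r => Sum.elim (fun _ => 0) (fun c => Λ r c) a')
        (fun _ => 0) a) β := by
    intro Λ β h hβ a b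
    have := h (fun r => a (Sum.inl r)) (fun c => b (Sum.inr c))
    simp only [Fintype.sum_sum_type, Sum.elim_inl, Sum.elim_inr, zero_mul, Finset.sum_const_zero,
      zero_add, add_zero]
    refine this.trans (mul_le_mul_of_nonneg_left ?_ hβ)
    have h1 : 0 ≤ ∑ c, a (Sum.inr c) ^ 2 := by positivity
    have h2 : 0 ≤ ∑ r, b (Sum.inl r) ^ 2 := by positivity
    linarith
  have hK : OpBound (fun r c => lam⁻¹ * Γ r c) 1 := by
    have := hb.smul (inv_nonneg.2 hlam0.le)
    rwa [inv_mul_cancel₀ hlam0.ne'] at this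
  refine ⟨⟨R ⊕ C, fun b => bif b then Sum.elim X (fun _ => X r₀) else Sum.elim (fun _ => Y c₀) Y,
    fun a a' => Sum.elim (fun r => Sum.elim (fun _ => 0) (fun c => lam⁻¹ * Γ r c) a')
        (fun _ => 0) a, fun b => bif b then Sum.elim p (fun _ => 0) else Sum.elim (fun _ => 0) q,
        hlift hK zero_le_one, ?_, ?_, ?_⟩, ?_⟩
  · rintro (_ | _) <;> simp [hp, hq]
  · simp only [Fintype.sum_sum_type, Sum.elim_inl, Sum.elim_inr, zero_mul, Finset.sum_const_zero,
      zero_add, add_zero, cond_true, cond_false, mul_assoc, ← Finset.mul_sum]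
    rw [← hlam, inv_mul_cancel₀ hlam0.ne']
  · intro i
    have h1 : OpBound (diffPart X Y (fun r c => lam⁻¹ * Γ r c) i) (1 / (l / μ)) := by
      have := (hμ i).smul (inv_nonneg.2 hlam0.le)
      have h2 : lam⁻¹ * μ ≤ 1 / (l / μ) := by
        rw [one_div_div, inv_mul_eq_div]
        exact div_le_div_of_nonneg_left hμ0.le hl (hΓ.trans hge)
      convert this.mono h2 using 3
      simp [diffPart]
    convert hlift h1 (by positivity) using 3 with a a'
    rcases a with r | c <;> rcases a' with r' | c'
    · exact ite_self (c := X r i = Y c₀ i) (0 : ℝ)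
    · rfl
    · exact ite_self (c := X r₀ i = Y c₀ i) (0 : ℝ)
    · exact ite_self (c := X r₀ i = Y c' i) (0 : ℝ)
  · rintro (_ | _) (_ | _) <;> simp [hX, hY]

end Normalize

end QC

/-! ### Projections onto functions of a given set of coordinates -/

namespace QC

section Matrices

variable {R C : Type} [Fintype R] [Fintype C] {A : R → C → ℝ} {b : ℝ}

lemma OpBound.of_sq (hb : 0 < b)
    (h : ∀ v : C → ℝ, ∑ r, (∑ c, A r c * v c) ^ 2 ≤ b ^ 2 * ∑ c, v c ^ 2) : OpBound A b := by
  intro p q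
  have h1 : ∀ r, 2 * ∑ c, A r c * (p r * q c) ≤ b * p r ^ 2 + b⁻¹ * (∑ c, A r c * q c) ^ 2 := by
    intro r
    have e : ∑ c, A r c * (p r * q c) = p r * ∑ c, A r c * q c := by
      rw [Finset.mul_sum]
      exact Finset.sum_congr rfl fun c _ => by ring
    rw [e]
    have h2 : 0 ≤ b⁻¹ * (b * p r - ∑ c, A r c * q c) ^ 2 := by positivity
    have h3 : b⁻¹ * (b * p r - ∑ c, A r c * q c) ^ 2 =
        b * p r ^ 2 + b⁻¹ * (∑ c, A r c * q c) ^ 2 - 2 * (p r * ∑ c, A r c * q c) := by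
      field_simp
      ring
    linarith
  have h2 := Finset.sum_le_sum fun r (_ : r ∈ Finset.univ) => h1 r
  rw [← Finset.mul_sum, Finset.sum_add_distrib, ← Finset.mul_sum, ← Finset.mul_sum] at h2
  have h3 := mul_le_mul_of_nonneg_left (h q) (inv_nonneg.2 hb.le)
  have h4 : b⁻¹ * (b ^ 2 * ∑ c, q c ^ 2) = b * ∑ c, q c ^ 2 := by
    field_simp
  linarith

lemma OpBound.comap (h : OpBound A b) {R' C' : Type} [Fintype R'] [Fintype C'] {f : R' → R}
    {g : C' → C} (hf : Function.Injective f) (hg : Function.Injective g) :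
    OpBound (fun r c => A (f r) (g c)) b := by
  intro p q
  have hP : ∀ r, r ∉ Set.range f → Function.extend f p 0 r = 0 := fun r hr =>
    Function.extend_apply' _ _ _ fun ⟨a, ha⟩ => hr ⟨a, ha⟩
  have hQ : ∀ c, c ∉ Set.range g → Function.extend g q 0 c = 0 := fun r hr =>
    Function.extend_apply' _ _ _ fun ⟨a, ha⟩ => hr ⟨a, ha⟩
  have e1 : ∑ r, p r ^ 2 = ∑ r, Function.extend f p 0 r ^ 2 :=
    Fintype.sum_of_injective f hf _ _ (fun r hr => by simp [hP r hr])
      (fun r => by rw [hf.extend_apply])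
  have e2 : ∑ c, q c ^ 2 = ∑ c, Function.extend g q 0 c ^ 2 :=
    Fintype.sum_of_injective g hg _ _ (fun r hr => by simp [hQ r hr])
      (fun r => by rw [hg.extend_apply])
  have e3 : ∑ r, ∑ c, A (f r) (g c) * (p r * q c) =
      ∑ r, ∑ c, A r c * (Function.extend f p 0 r * Function.extend g q 0 c) := by
    refine Fintype.sum_of_injective f hf _ _ (fun r hr => by simp [hP r hr]) fun r => ?_
    refine Fintype.sum_of_injective g hg _ _ (fun c hc => by simp [hQ c hc]) fun c => ?_
    rw [hf.extend_apply, hg.extend_apply]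
  rw [e1, e2, e3]
  exact h _ _

/-- Keeping only the entries between differently colored rows and columns does not increase
the norm. -/
lemma OpBound.bicolor (h : OpBound A b) (α : R → Bool) (β : C → Bool) :
    OpBound (fun r c => if α r = β c then 0 else A r c) b := by
  intro p q
  have h1 := h (fun r => if α r then p r else 0) (fun c => if β c then 0 else q c)
  have h2 := h (fun r => if α r then 0 else p r) (fun c => if β c then q c else 0)
  have e1 : ∑ r, (if α r then p r else 0) ^ 2 + ∑ r, (if α r then 0 else p r) ^ 2 =
      ∑ r, p r ^ 2 := by
    rw [← Finset.sum_add_distrib]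
    refine Finset.sum_congr rfl fun r _ => ?_
    cases α r <;> simp
  have e2 : ∑ c, (if β c then 0 else q c) ^ 2 + ∑ c, (if β c then q c else 0) ^ 2 =
      ∑ c, q c ^ 2 := by
    rw [← Finset.sum_add_distrib]
    refine Finset.sum_congr rfl fun r _ => ?_
    cases β r <;> simp
  have e3 : ∑ r, ∑ c, A r c * ((if α r then p r else 0) * (if β c then 0 else q c)) +
      ∑ r, ∑ c, A r c * ((if α r then 0 else p r) * (if β c then q c else 0)) =
      ∑ r, ∑ c, (if α r = β c then 0 else A r c) * (p r * q c) := by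
    simp only [← Finset.sum_add_distrib]
    refine Finset.sum_congr rfl fun r _ => Finset.sum_congr rfl fun c _ => ?_
    cases α r <;> cases β c <;> simp
  rw [← e1, ← e2, ← e3]
  linarith

end Matrices

section Projections

variable {V Λ : Type} [Fintype V] [DecidableEq V] [Fintype Λ] [DecidableEq Λ]

/-- The kernel of the projection onto functions depending exactly on the coordinates in `T`. -/
noncomputable def projT (T : Finset V) (x y : V → Λ) : ℝ :=
  ∏ i, if i ∈ T then (if x i = y i then 1 else 0) - 1 / (Fintype.card Λ : ℝ)
    else 1 / (Fintype.card Λ : ℝ)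

lemma sum_projT (x y : V → Λ) : ∑ T, projT T x y = if x = y then 1 else 0 := by
  have h := Finset.prod_add
    (fun i => (if x i = y i then (1 : ℝ) else 0) - 1 / (Fintype.card Λ : ℝ))
    (fun _ => 1 / (Fintype.card Λ : ℝ)) (Finset.univ : Finset V)
  simp only [sub_add_cancel, Finset.powerset_univ] at h
  have e : ∏ i, (if x i = y i then (1 : ℝ) else 0) = if x = y then 1 else 0 := by
    by_cases hxy : x = y
    · simp [hxy]
    · obtain ⟨i, hi⟩ := Function.ne_iff.1 hxy
      rw [if_neg hxy]
      exact Finset.prod_eq_zero (Finset.mem_univ i) (by simp [hi])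
  rw [← e, h]
  refine Finset.sum_congr rfl fun T _ => ?_
  rw [projT, Finset.prod_ite]
  congr 1
  · refine Finset.prod_congr ?_ fun _ _ => rfl
    ext
    simp
  · refine Finset.prod_congr ?_ fun _ _ => rfl
    ext
    simp

lemma sum_projT_mul [Nonempty Λ] (T T' : Finset V) (y y' : V → Λ) :
    ∑ x, projT T x y * projT T' x y' = if T = T' then projT T y y' else 0 := by
  have hq : (Fintype.card Λ : ℝ) ≠ 0 := by simp
  have h1 : ∑ x : V → Λ, projT T x y * projT T' x y' = ∏ i, ∑ a : Λ,
      (if i ∈ T then (if a = y i then 1 else 0) - 1 / (Fintype.card Λ : ℝ)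
        else 1 / (Fintype.card Λ : ℝ)) *
      (if i ∈ T' then (if a = y' i then 1 else 0) - 1 / (Fintype.card Λ : ℝ)
        else 1 / (Fintype.card Λ : ℝ)) := by
    rw [prod_sum_fun]
    refine Finset.sum_congr rfl fun x _ => ?_
    rw [projT, projT, Finset.prod_mul_distrib]
  have hs : ∀ b : Λ, ∑ a : Λ, ((if a = b then 1 else 0) - 1 / (Fintype.card Λ : ℝ)) = 0 := by
    intro b
    rw [Finset.sum_sub_distrib]
    simp
  rw [h1]
  split_ifs with hT
  · subst hT
    refine Finset.prod_congr rfl fun i _ => ?_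
    by_cases hi : i ∈ T
    · simp only [hi, if_true, sub_mul, ite_mul, one_mul, zero_mul, Finset.sum_sub_distrib,
        ← Finset.mul_sum, hs, mul_zero, sub_zero, Finset.sum_ite_eq', Finset.mem_univ]
    · simp only [hi, if_false, Finset.sum_const, Finset.card_univ, nsmul_eq_mul]
      field_simp
  · obtain ⟨i, hi⟩ : ∃ i, ¬ (i ∈ T ↔ i ∈ T') := by
      by_contra h
      push Not at h
      exact hT (Finset.ext h)
    refine Finset.prod_eq_zero (Finset.mem_univ i) ?_
    by_cases h1 : i ∈ T <;> by_cases h2 : i ∈ T' <;> simp only [h1, h2, iff_true, not_true,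
      iff_false, not_false_iff, if_true, if_false, ← Finset.mul_sum, ← Finset.sum_mul, hs, zero_mul,
      mul_zero] at hi ⊢

lemma sum_projT_left [Nonempty Λ] (T : Finset V) (y : V → Λ) :
    ∑ x, projT T x y = if T = ∅ then 1 else 0 := by
  have hq : (Fintype.card Λ : ℝ) ≠ 0 := by simp
  simp only [projT]
  rw [← prod_sum_fun (fun i a => if i ∈ T then (if a = y i then 1 else 0) -
    1 / (Fintype.card Λ : ℝ) else 1 / (Fintype.card Λ : ℝ))]
  split_ifs with h
  · simp [h]
  · obtain ⟨i, hi⟩ := Finset.nonempty_iff_ne_empty.2 h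
    refine Finset.prod_eq_zero (Finset.mem_univ i) ?_
    simp [hi]

lemma projT_insert {T : Finset V} {i : V} (hi : i ∉ T) {x y : V → Λ} (hxy : x i ≠ y i) :
    projT (insert i T) x y = - projT T x y := by
  rw [projT, projT, ← Finset.mul_prod_erase _ _ (Finset.mem_univ i),
    ← Finset.mul_prod_erase (Finset.univ : Finset V) (fun i => if i ∈ T then _ else _)
      (Finset.mem_univ i)]
  have e : ∏ j ∈ Finset.univ.erase i, (if j ∈ insert i T then
      (if x j = y j then 1 else 0) - 1 / (Fintype.card Λ : ℝ) else 1 / (Fintype.card Λ : ℝ)) =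
      ∏ j ∈ Finset.univ.erase i, (if j ∈ T then
      (if x j = y j then 1 else 0) - 1 / (Fintype.card Λ : ℝ) else 1 / (Fintype.card Λ : ℝ)) := by
    refine Finset.prod_congr rfl fun j hj => ?_
    simp [Finset.mem_insert, Finset.ne_of_mem_erase hj]
  rw [e]
  simp [hi, hxy]

variable [AddCommGroup Λ]

lemma projT_add_single {T : Finset V} {i : V} (hi : i ∉ T) (x y : V → Λ) (c : Λ) :
    projT T (x + Pi.single i c) y = projT T x y := by
  refine Finset.prod_congr rfl fun j _ => ?_
  by_cases hj : j ∈ T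
  · have : j ≠ i := fun h => hi (h ▸ hj)
    simp [hj, this]
  · simp [hj]

/-- A function that ignores coordinate `i` has its sum equidistributed over the level sets of a
map that is injective in coordinate `i`. -/
lemma card_mul_sum_level {i : V} {s : (V → Λ) → Λ} (hs : ∀ x c, s (x + Pi.single i c) = s x + c)
    {g : (V → Λ) → ℝ} (hg : ∀ x c, g (x + Pi.single i c) = g x) :
    (Fintype.card Λ : ℝ) * ∑ x, (if s x = 0 then g x else 0) = ∑ x, g x := by
  have h1 : ∀ c, ∑ x, (if s x = c then g x else 0) = ∑ x, (if s x = 0 then g x else 0) := by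
    intro c
    rw [← Equiv.sum_comp (Equiv.addRight (Pi.single i c : V → Λ))]
    simp [hs, hg]
  have h2 : ∑ x, g x = ∑ c, ∑ x, (if s x = c then g x else 0) := by
    rw [Finset.sum_comm]
    simp
  rw [h2, Finset.sum_congr rfl fun c _ => h1 c]
  simp

variable {Z : Type} [Fintype Z]

/-- Matrix with rows `(z, x)`, `s z x = 0`, and projection coefficients `a z T`. -/
noncomputable def projMat (s : Z → (V → Λ) → Λ) (a : Z → Finset V → ℝ) (r : Z × (V → Λ))
    (y : V → Λ) : ℝ :=
  if s r.1 r.2 = 0 then Real.sqrt (Fintype.card Λ) * ∑ T, a r.1 T * projT T r.2 y else 0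

lemma projMat_sq_le [Nonempty Λ] {k : ℕ} {s : Z → (V → Λ) → Λ} {a : Z → Finset V → ℝ}
    (pos : Z → Fin k → V) (hs : ∀ z t x c, s z (x + Pi.single (pos z t) c) = s z x + c)
    (ha : ∀ z T, ∃ t, a z T ≠ 0 → pos z t ∉ T) {D : ℝ} (hD : ∀ T, ∑ z, a z T ^ 2 ≤ D)
    (v : (V → Λ) → ℝ) :
    ∑ r, (∑ y, projMat s a r y * v y) ^ 2 ≤ k * D * ∑ y, v y ^ 2 := by
  choose τ hτ using ha
  let E : Finset V → (V → Λ) → ℝ := fun T x => ∑ y, projT T x y * v y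
  have hE : ∀ T T', ∑ x, E T x * E T' x =
      if T = T' then ∑ y, ∑ y', projT T y y' * (v y * v y') else 0 := by
    intro T T'
    have h1 : ∑ x, E T x * E T' x = ∑ y, ∑ y', (v y * v y') * ∑ x, projT T x y * projT T' x y' := by
      simp only [E, Finset.sum_mul_sum]
      simp only [Finset.mul_sum]
      rw [Finset.sum_comm]
      refine Finset.sum_congr rfl fun y _ => ?_
      rw [Finset.sum_comm]
      refine Finset.sum_congr rfl fun y' _ => Finset.sum_congr rfl fun x _ => ?_
      ring
    rw [h1]
    simp only [sum_projT_mul]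
    split_ifs
    · exact Finset.sum_congr rfl fun y _ => Finset.sum_congr rfl fun y' _ => mul_comm _ _
    · simp
  have hEsum : ∑ T, ∑ x, E T x * E T x = ∑ y, v y ^ 2 := by
    simp only [hE, if_true]
    rw [Finset.sum_comm]
    refine Finset.sum_congr rfl fun y _ => ?_
    rw [Finset.sum_comm]
    simp only [← Finset.sum_mul, sum_projT, ite_mul, one_mul, zero_mul, Finset.sum_ite_eq,
      Finset.mem_univ, if_true, pow_two]
  let g : Z → Fin k → (V → Λ) → ℝ := fun z t x => ∑ T, if τ z T = t then a z T * E T x else 0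
  have hg : ∀ z t x c, g z t (x + Pi.single (pos z t) c) = g z t x := by
    intro z t x c
    refine Finset.sum_congr rfl fun T _ => ?_
    split_ifs with h
    · by_cases h0 : a z T = 0
      · simp [h0]
      · have := hτ z T h0
        rw [h] at this
        simp only [E, projT_add_single this]
    · rfl
  have hrow : ∀ z x, (∑ y, projMat s a (z, x) y * v y) ^ 2 ≤
      k * ∑ t, (Fintype.card Λ : ℝ) * if s z x = 0 then g z t x ^ 2 else 0 := by
    intro z x
    by_cases h0 : s z x = 0
    · have e : ∑ y, projMat s a (z, x) y * v y = Real.sqrt (Fintype.card Λ) * ∑ t, g z t x := by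
        have e1 : ∑ t, g z t x = ∑ T, a z T * E T x := by
          simp only [g]
          rw [Finset.sum_comm]
          simp
        rw [e1]
        simp only [projMat, h0, if_true, E, Finset.mul_sum, Finset.sum_mul]
        rw [Finset.sum_comm]
        refine Finset.sum_congr rfl fun T _ => Finset.sum_congr rfl fun y _ => ?_
        ring
      rw [e, mul_pow, Real.sq_sqrt (Nat.cast_nonneg _)]
      simp only [h0, if_true, ← Finset.mul_sum]
      have := sq_sum_le_card_mul_sum_sq (s := (Finset.univ : Finset (Fin k))) (f := fun t => g z t x)
      rw [Finset.card_univ, Fintype.card_fin] at this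
      have := mul_le_mul_of_nonneg_left this (Nat.cast_nonneg (α := ℝ) (Fintype.card Λ))
      linarith
    · simp [projMat, h0]
  have hz : ∀ z, ∑ x, (∑ y, projMat s a (z, x) y * v y) ^ 2 ≤
      k * ∑ T, a z T ^ 2 * ∑ x, E T x * E T x := by
    intro z
    refine (Finset.sum_le_sum fun x _ => hrow z x).trans (le_of_eq ?_)
    rw [← Finset.mul_sum, Finset.sum_comm]
    congr 1
    have e1 : ∀ t, ∑ x, (Fintype.card Λ : ℝ) * (if s z x = 0 then g z t x ^ 2 else 0) =
        ∑ T, if τ z T = t then a z T ^ 2 * ∑ x, E T x * E T x else 0 := by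
      intro t
      rw [← Finset.mul_sum, card_mul_sum_level (hs z t) (fun x c => by rw [hg])]
      simp only [g, pow_two, Finset.sum_mul_sum]
      rw [Finset.sum_comm]
      refine Finset.sum_congr rfl fun T _ => ?_
      rw [Finset.sum_comm]
      rw [Finset.sum_eq_single T]
      · split_ifs
        · rw [Finset.mul_sum]
          exact Finset.sum_congr rfl fun x _ => by ring
        · simp
      · intro T' _ hT'
        have h0 := hE T T'
        rw [if_neg (Ne.symm hT')] at h0
        split_ifs
        · rw [← mul_zero (a z T * a z T'), ← h0, Finset.mul_sum]
          exact Finset.sum_congr rfl fun x _ => by ring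
        all_goals simp
      · simp
    simp only [e1]
    rw [Finset.sum_comm]
    simp
  rw [Fintype.sum_prod_type]
  refine (Finset.sum_le_sum fun z _ => hz z).trans ?_
  rw [← Finset.mul_sum, Finset.sum_comm, mul_assoc, ← hEsum]
  refine mul_le_mul_of_nonneg_left ?_ (Nat.cast_nonneg _)
  rw [Finset.mul_sum]
  refine Finset.sum_le_sum fun T _ => ?_
  rw [← Finset.sum_mul]
  exact mul_le_mul_of_nonneg_right (hD T) (Finset.sum_nonneg fun x _ => mul_self_nonneg _)

lemma sum_projMat [Nonempty Λ] {k : ℕ} {s : Z → (V → Λ) → Λ} {a : Z → Finset V → ℝ}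
    (pos : Z → Fin k → V) (hs : ∀ z t x c, s z (x + Pi.single (pos z t) c) = s z x + c)
    (ha : ∀ z T, ∃ t, a z T ≠ 0 → pos z t ∉ T) (ha0 : ∀ z, a z ∅ = 1) (y : V → Λ) :
    Real.sqrt (Fintype.card Λ) * ∑ r, projMat s a r y = Fintype.card Z := by
  have hq : (Fintype.card Λ : ℝ) ≠ 0 := by simp
  have h1 : ∀ z T, (Fintype.card Λ : ℝ) * (a z T * ∑ x, if s z x = 0 then projT T x y else 0) =
      if T = ∅ then 1 else 0 := by
    intro z T
    obtain ⟨t, ht⟩ := ha z T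
    by_cases h0 : a z T = 0
    · have : T ≠ ∅ := by
        rintro rfl
        rw [ha0] at h0
        exact one_ne_zero h0
      simp [h0, this]
    · have := card_mul_sum_level (hs z t) (g := fun x => projT T x y)
        (fun x c => projT_add_single (ht h0) _ _ _)
      rw [mul_left_comm, this, sum_projT_left]
      split_ifs with hT
      · rw [hT, ha0, one_mul]
      · simp
  rw [Fintype.sum_prod_type, Finset.mul_sum]
  have h2 : ∀ z, Real.sqrt (Fintype.card Λ) * ∑ x, projMat s a (z, x) y = 1 := by
    intro z
    have e : Real.sqrt (Fintype.card Λ) * ∑ x, projMat s a (z, x) y =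
        ∑ T, (Fintype.card Λ : ℝ) * (a z T * ∑ x, if s z x = 0 then projT T x y else 0) := by
      simp only [Finset.mul_sum]
      rw [Finset.sum_comm]
      refine Finset.sum_congr rfl fun x _ => ?_
      simp only [projMat]
      split_ifs
      · simp only [Finset.mul_sum]
        refine Finset.sum_congr rfl fun T _ => ?_
        rw [← mul_assoc, Real.mul_self_sqrt (Nat.cast_nonneg _)]
      · simp
    rw [e]
    simp [h1]
  simp [h2]

end Projections

end QC

/-! ### The block `k`-sum function -/

namespace QC

lemma ofProp_eq_true_iff {P : Prop} : ofProp P = true ↔ P := by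
  unfold ofProp
  exact @decide_eq_true_iff P (Classical.propDecidable P)

lemma ofProp_eq_false_iff {P : Prop} : ofProp P = false ↔ ¬ P := by
  rw [← Bool.not_eq_true, ofProp_eq_true_iff]

/-- Index set of the dual-rail encoding of `k` blocks of `n` words of `w` bits. -/
abbrev KSumIdx (k n w : ℕ) : Type := (Fin k × Fin n) × Fin w × ZMod 2

/-- The dual-rail encoding. -/
def dualRail {V : Type} {w : ℕ} (x : V → Fin w → ZMod 2) (e : V × Fin w × ZMod 2) : Bool :=
  decide (x e.1 e.2.1 = e.2.2)

/-- One word can be chosen from each block so that they sum to zero. -/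
def KSum {k n w : ℕ} (z : KSumIdx k n w → Bool) : Prop :=
  ∃ (σ : Fin k → Fin n) (a : Fin k → Fin w → ZMod 2), ∑ t, a t = 0 ∧
    ∀ t b, z ((t, σ t), b, a t b) = true

/-- The negated block `k`-sum function. -/
noncomputable def noKSum (k n w : ℕ) (z : KSumIdx k n w → Bool) : Bool := ofProp (¬ KSum z)

lemma kSum_dualRail {k n w : ℕ} (x : Fin k × Fin n → Fin w → ZMod 2) :
    KSum (dualRail x) ↔ ∃ σ : Fin k → Fin n, ∑ t, x (t, σ t) = 0 := by
  constructor
  · rintro ⟨σ, a, ha, h⟩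
    refine ⟨σ, ?_⟩
    rw [← ha]
    refine Finset.sum_congr rfl fun t _ => ?_
    funext b
    simpa [dualRail] using h t b
  · rintro ⟨σ, h⟩
    exact ⟨σ, fun t => x (t, σ t), h, fun t b => by simp [dualRail]⟩

section Coefficients

variable {V Λ Z : Type} [Fintype V] [DecidableEq V] [Fintype Λ] [DecidableEq Λ]

/-- The effective coefficients on pairs of inputs that differ at position `i`. -/
def diffCoef (a : Z → Finset V → ℝ) (i : V) (z : Z) (T : Finset V) : ℝ :=
  if i ∈ T then 0 else a z T - a z (insert i T)

lemma projMat_eq_of_ne [AddCommGroup Λ] (s : Z → (V → Λ) → Λ) (a : Z → Finset V → ℝ) {i : V}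
    {r : Z × (V → Λ)} {y : V → Λ} (h : r.2 i ≠ y i) :
    projMat s a r y = projMat s (diffCoef a i) r y := by
  unfold projMat
  congr 2
  have h1 : ∑ T, a r.1 T * projT T r.2 y =
      ∑ T, (if i ∈ T then 0 else a r.1 T * projT T r.2 y) +
        ∑ T, (if i ∈ T then a r.1 T * projT T r.2 y else 0) := by
    rw [← Finset.sum_add_distrib]
    refine Finset.sum_congr rfl fun T _ => ?_
    split_ifs <;> simp
  have h2 : ∑ T, (if i ∈ T then a r.1 T * projT T r.2 y else 0) =
      ∑ T, (if i ∈ T then 0 else a r.1 (insert i T) * projT (insert i T) r.2 y) := by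
    have h3 : ∑ T, (if i ∈ T then 0 else a r.1 (insert i T) * projT (insert i T) r.2 y) =
        ∑ T, (if i ∉ T then a r.1 (insert i T) * projT (insert i T) r.2 y else 0) :=
      Finset.sum_congr rfl fun T _ => (ite_not (i ∈ T) _ _).symm
    rw [h3, ← Finset.sum_filter, ← Finset.sum_filter]
    refine Finset.sum_bij' (fun T _ => T.erase i) (fun T _ => insert i T) ?_ ?_ ?_ ?_ ?_
    · simp
    · simp
    · intro T hT
      exact Finset.insert_erase (by simpa using hT)
    · intro T hT
      exact Finset.erase_insert (by simpa using hT)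
    · intro T hT
      rw [Finset.insert_erase (by simpa using hT)]
  rw [h1, h2, ← Finset.sum_add_distrib]
  refine Finset.sum_congr rfl fun T _ => ?_
  unfold diffCoef
  split_ifs with hi
  · simp
  · rw [projT_insert hi h]
    ring

end Coefficients

section Bound

variable {k n : ℕ}

/-- The decreasing weight of the subset `T`, zero once `T` contains the chosen positions. -/
noncomputable def kCoef (r : ℕ) (σ : Fin k → Fin n) (T : Finset (Fin k × Fin n)) : ℝ :=
  if ∀ t, (t, σ t) ∈ T then 0 else max 0 (1 - (T.card : ℝ) / r)

lemma card_completions_le (i : Fin k × Fin n) (T : Finset (Fin k × Fin n)) :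
    (Finset.univ.filter fun σ : Fin k → Fin n =>
      (∀ t, (t, σ t) ∈ insert i T) ∧ ¬ ∀ t, (t, σ t) ∈ T).card ≤ T.card ^ (k - 1) := by
  have hsub : (Finset.univ.filter fun σ : Fin k → Fin n =>
      (∀ t, (t, σ t) ∈ insert i T) ∧ ¬ ∀ t, (t, σ t) ∈ T) ⊆
      Fintype.piFinset fun t => if t = i.1 then {i.2} else T.image Prod.snd := by
    intro σ hσ
    simp only [Finset.mem_filter, Finset.mem_univ, true_and, not_forall] at hσ
    obtain ⟨h1, t', ht'⟩ := hσ
    rw [Fintype.mem_piFinset]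
    intro t
    split_ifs with ht
    · have h2 := h1 t'
      rw [Finset.mem_insert, or_iff_left ht'] at h2
      have h3 : t' = i.1 := congrArg Prod.fst h2
      have h4 : σ t' = i.2 := congrArg Prod.snd h2
      rw [Finset.mem_singleton, ht, ← h3, h4]
    · have h2 := h1 t
      rw [Finset.mem_insert] at h2
      rcases h2 with h2 | h2
      · exact absurd (congrArg Prod.fst h2) ht
      · exact Finset.mem_image.2 ⟨_, h2, rfl⟩
  refine (Finset.card_le_card hsub).trans ?_
  rw [Fintype.card_piFinset, ← Finset.mul_prod_erase _ _ (Finset.mem_univ i.1)]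
  simp only [if_true, Finset.card_singleton, one_mul]
  refine (Finset.prod_le_pow_card _ _ T.card fun t ht => ?_).trans ?_
  · rw [if_neg (Finset.ne_of_mem_erase ht)]
    exact Finset.card_image_le
  · rw [Finset.card_erase_of_mem (Finset.mem_univ _), Finset.card_univ, Fintype.card_fin]

lemma sum_diffCoef_sq_le {r : ℕ} (hr : 0 < r) (i : Fin k × Fin n) (T : Finset (Fin k × Fin n)) :
    ∑ σ, diffCoef (kCoef r) i σ T ^ 2 ≤ (r : ℝ) ^ (k - 1) + (n : ℝ) ^ k / (r : ℝ) ^ 2 := by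
  have hr' : (0 : ℝ) < r := Nat.cast_pos.2 hr
  by_cases hi : i ∈ T
  · simp only [diffCoef, hi, if_true]
    simp
    positivity
  have hterm : ∀ σ : Fin k → Fin n, diffCoef (kCoef r) i σ T ^ 2 ≤
      (if (∀ t, (t, σ t) ∈ insert i T) ∧ ¬ ∀ t, (t, σ t) ∈ T then
        (if T.card ≤ r then 1 else 0) else 0) + 1 / (r : ℝ) ^ 2 := by
    intro σ
    have hpos : (0 : ℝ) ≤ 1 / (r : ℝ) ^ 2 := by positivity
    simp only [diffCoef, hi, if_false, kCoef]
    by_cases h1 : ∀ t, (t, σ t) ∈ T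
    · have h2 : ∀ t, (t, σ t) ∈ insert i T := fun t => Finset.mem_insert_of_mem (h1 t)
      rw [if_pos h1, if_pos h2, if_neg (by tauto)]
      simp
    · by_cases h2 : ∀ t, (t, σ t) ∈ insert i T
      · rw [if_neg h1, if_pos h2, if_pos ⟨h2, h1⟩, sub_zero]
        split_ifs with h3
        · have h4 : max 0 (1 - (T.card : ℝ) / r) ≤ 1 := by
            refine max_le zero_le_one ?_
            have : (0 : ℝ) ≤ (T.card : ℝ) / r := by positivity
            linarith
          have h5 : 0 ≤ max 0 (1 - (T.card : ℝ) / r) := le_max_left _ _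
          nlinarith
        · have h4 : max 0 (1 - (T.card : ℝ) / r) = 0 := by
            refine max_eq_left ?_
            have : (1 : ℝ) ≤ (T.card : ℝ) / r := by
              rw [one_le_div hr']
              exact_mod_cast (not_le.1 h3).le
            linarith
          rw [h4]
          simp
      · rw [if_neg h1, if_neg h2, if_neg (by tauto), Finset.card_insert_of_notMem hi, zero_add,
          ← one_div_pow]
        refine sq_le_sq' ?_ ?_
        · have : max 0 (1 - ((T.card + 1 : ℕ) : ℝ) / r) ≤ max 0 (1 - (T.card : ℝ) / r) := by
            refine max_le_max_left _ ?_
            have : (T.card : ℝ) / r ≤ ((T.card + 1 : ℕ) : ℝ) / r := by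
              gcongr
              simp
            linarith
          have h0 : (0 : ℝ) ≤ 1 / r := by positivity
          linarith
        · have : max 0 (1 - (T.card : ℝ) / r) ≤ max 0 (1 - ((T.card + 1 : ℕ) : ℝ) / r) + 1 / r := by
            refine max_le (by positivity) ?_
            have h3 := le_max_right 0 (1 - ((T.card + 1 : ℕ) : ℝ) / r)
            have h4 : ((T.card + 1 : ℕ) : ℝ) / r = (T.card : ℝ) / r + 1 / r := by
              push_cast
              ring
            linarith
          linarith
  refine (Finset.sum_le_sum fun σ _ => hterm σ).trans ?_
  rw [Finset.sum_add_distrib]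
  refine add_le_add ?_ ?_
  · rw [← Finset.sum_filter, Finset.sum_const, nsmul_eq_mul]
    split_ifs with h
    · rw [mul_one]
      have h1 := (card_completions_le i T).trans (Nat.pow_le_pow_left h (k - 1))
      exact_mod_cast h1
    · rw [mul_zero]
      positivity
  · rw [Finset.sum_const, Finset.card_univ, Fintype.card_fun, Fintype.card_fin, Fintype.card_fin,
      nsmul_eq_mul]
    push_cast
    exact le_of_eq (by ring)

lemma sum_add_single {Λ : Type} [AddCommGroup Λ] (σ : Fin k → Fin n) (t : Fin k)
    (x : Fin k × Fin n → Λ) (c : Λ) :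
    ∑ t', (x + Pi.single (t, σ t) c : Fin k × Fin n → Λ) (t', σ t') = ∑ t', x (t', σ t') + c := by
  simp only [Pi.add_apply, Finset.sum_add_distrib]
  congr 1
  rw [Finset.sum_eq_single t]
  · simp
  · intro t' _ ht'
    rw [Pi.single_eq_of_ne]
    intro h
    exact ht' (congrArg Prod.fst h)
  · simp

lemma hasAdv_noKSum {w r : ℕ} (hk : 0 < k) (hn : 0 < n) (hr : 0 < r) (hw : 2 * n ^ k ≤ 2 ^ w) :
    HasAdv (noKSum k n w) (Real.sqrt ((n : ℝ) ^ k / 2) /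
      Real.sqrt (k * ((r : ℝ) ^ (k - 1) + (n : ℝ) ^ k / (r : ℝ) ^ 2))) := by
  classical
  let V := Fin k × Fin n
  let Λ := Fin w → ZMod 2
  let s : (Fin k → Fin n) → (V → Λ) → Λ := fun σ x => ∑ t, x (t, σ t)
  let pos : (Fin k → Fin n) → Fin k → V := fun σ t => (t, σ t)
  have hs : ∀ σ t x c, s σ (x + Pi.single (pos σ t) c) = s σ x + c := fun σ t x c =>
    sum_add_single σ t x c
  let Y := {y : V → Λ // ∀ σ, s σ y ≠ 0}
  let Q := {z : (Fin k → Fin n) × (V → Λ) // s z.1 z.2 = 0}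
  have hcoef : ∀ σ T, ∃ t, kCoef r σ T ≠ 0 → pos σ t ∉ T := by
    intro σ T
    by_cases h : ∀ t, (t, σ t) ∈ T
    · refine ⟨⟨0, hk⟩, fun h' => absurd ?_ h'⟩
      rw [kCoef, if_pos h]
    · obtain ⟨t, ht⟩ := not_forall.1 h
      exact ⟨t, fun _ => ht⟩
  have hcoef' : ∀ i σ T, ∃ t, diffCoef (kCoef r) i σ T ≠ 0 → pos σ t ∉ T := by
    intro i σ T
    by_cases h : ∀ t, (t, σ t) ∈ T
    · refine ⟨⟨0, hk⟩, fun h' => absurd ?_ h'⟩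
      have h2 : ∀ t, (t, σ t) ∈ insert i T := fun t => Finset.mem_insert_of_mem (h t)
      rw [diffCoef, kCoef, kCoef, if_pos h, if_pos h2]
      simp
    · obtain ⟨t, ht⟩ := not_forall.1 h
      exact ⟨t, fun _ => ht⟩
  have hcoef0 : ∀ σ : Fin k → Fin n, kCoef r σ ∅ = 1 := by
    intro σ
    rw [kCoef, if_neg (by
      intro h
      exact absurd (h ⟨0, hk⟩) (Finset.notMem_empty _))]
    simp
  set q : ℝ := ((Fintype.card Λ : ℕ) : ℝ) with hq
  have hqw : q = 2 ^ w := by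
    simp [hq, Λ, ZMod.card]
  have hq0 : 0 < q := by rw [hqw]; positivity
  set N : ℝ := ((Fintype.card (V → Λ) : ℕ) : ℝ) with hN
  have hN0 : 0 < N := by
    rw [hN]
    exact_mod_cast Fintype.card_pos
  set D : ℝ := (n : ℝ) ^ k with hD
  have hD0 : 0 < D := by positivity
  have hlevel : ∀ σ, q * ∑ x, (if s σ x = 0 then (1 : ℝ) else 0) = N := by
    intro σ
    rw [hq, card_mul_sum_level (hs σ ⟨0, hk⟩) (g := fun _ => 1) (fun _ _ => rfl)]
    simp [hN]
  have hQcard : q * (Fintype.card Q : ℝ) = D * N := by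
    have h1 : (Fintype.card Q : ℝ) = ∑ σ, ∑ x, (if s σ x = 0 then (1 : ℝ) else 0) := by
      rw [Fintype.card_subtype, ← Fintype.sum_prod_type'
        (f := fun σ x => if s σ x = 0 then (1 : ℝ) else 0), Finset.sum_boole]
    rw [h1, Finset.mul_sum, Finset.sum_congr rfl fun σ _ => hlevel σ]
    simp [hD]
  have hYcard : N / 2 ≤ (Fintype.card Y : ℝ) := by
    have h1 : N ≤ Fintype.card Y + ∑ σ, ∑ x, (if s σ x = 0 then (1 : ℝ) else 0) := by
      have h2 : (Fintype.card Y : ℝ) = ∑ y : V → Λ, if ∀ σ, s σ y ≠ 0 then (1 : ℝ) else 0 := by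
        rw [Fintype.card_subtype, Finset.sum_boole]
      rw [h2, Finset.sum_comm, ← Finset.sum_add_distrib, hN]
      have h3 : (Fintype.card (V → Λ) : ℝ) = ∑ _y : V → Λ, (1 : ℝ) := by simp
      rw [h3]
      refine Finset.sum_le_sum fun y _ => ?_
      have hnn : ∀ σ, (0 : ℝ) ≤ if s σ y = 0 then 1 else 0 := fun σ => by split_ifs <;> norm_num
      by_cases hy : ∀ σ, s σ y ≠ 0
      · rw [if_pos hy]
        have := Finset.sum_nonneg fun σ (_ : σ ∈ Finset.univ) => hnn σ
        linarith
      · rw [if_neg hy, zero_add]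
        push Not at hy
        obtain ⟨σ, hσ⟩ := hy
        have := Finset.single_le_sum (fun σ _ => hnn σ) (Finset.mem_univ σ)
        rwa [if_pos hσ] at this
    have h2 : q * ∑ σ, ∑ x, (if s σ x = 0 then (1 : ℝ) else 0) = D * N := by
      rw [Finset.mul_sum, Finset.sum_congr rfl fun σ _ => hlevel σ]
      simp [hD]
    have h3 : 2 * D ≤ q := by
      rw [hD, hqw]
      exact_mod_cast hw
    have h4 : 2 * ∑ σ, ∑ x, (if s σ x = 0 then (1 : ℝ) else 0) ≤ N := by
      have h5 : q * (2 * ∑ σ, ∑ x, (if s σ x = 0 then (1 : ℝ) else 0)) ≤ q * N := by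
        have := mul_le_mul_of_nonneg_right h3 hN0.le
        linarith
      exact le_of_mul_le_mul_left h5 hq0
    linarith
  have hY0 : 0 < (Fintype.card Y : ℝ) := by linarith
  have hQ0 : 0 < (Fintype.card Q : ℝ) := by
    by_contra h
    have h1 : (Fintype.card Q : ℝ) = 0 := le_antisymm (not_lt.1 h) (Nat.cast_nonneg _)
    rw [h1, mul_zero] at hQcard
    exact absurd hQcard (by positivity)
  have hμ0 : 0 < (k : ℝ) * ((r : ℝ) ^ (k - 1) + (n : ℝ) ^ k / (r : ℝ) ^ 2) := by positivity
  refine HasAdv.of_matrix (R := Y) (C := Q) (X := fun y => dualRail y.1)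
    (Y := fun z => dualRail z.1.2) ?_ ?_ (fun y z => projMat s (kCoef r) z.1 y.1)
    (p₀ := fun _ => 1 / Real.sqrt (Fintype.card Y)) (q₀ := fun _ => 1 / Real.sqrt (Fintype.card Q))
    ?_ ?_ (by positivity) (Real.sqrt_pos.2 hμ0) ?_ ?_
  · intro y
    rw [noKSum, ofProp_eq_true_iff, kSum_dualRail]
    rintro ⟨σ, hσ⟩
    exact y.2 σ hσ
  · intro z
    rw [noKSum, ofProp_eq_false_iff, not_not, kSum_dualRail]
    exact ⟨z.1.1, z.2⟩
  · rw [Finset.sum_const, Finset.card_univ, nsmul_eq_mul, div_pow, Real.sq_sqrt hY0.le]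
    field_simp
  · rw [Finset.sum_const, Finset.card_univ, nsmul_eq_mul, div_pow, Real.sq_sqrt hQ0.le]
    field_simp
  · have hcol : ∀ y : Y, Real.sqrt q * ∑ z : Q, projMat s (kCoef r) z.1 y.1 = D := by
      intro y
      have h1 := sum_projMat pos hs hcoef hcoef0 y.1
      have h2 : ∑ z : Q, projMat s (kCoef r) z.1 y.1 = ∑ z, projMat s (kCoef r) z y.1 := by
        refine Fintype.sum_of_injective Subtype.val Subtype.val_injective _ _ ?_ fun _ => rfl
        intro z hz
        rw [projMat, if_neg]
        intro h
        exact hz ⟨⟨z, h⟩, rfl⟩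
      rw [h2, h1]
      simp [hD]
    have hsq0 : 0 < Real.sqrt q := Real.sqrt_pos.2 hq0
    have h1 : ∑ y : Y, ∑ z : Q, projMat s (kCoef r) z.1 y.1 *
        (1 / Real.sqrt (Fintype.card Y) * (1 / Real.sqrt (Fintype.card Q))) =
        Fintype.card Y * (D / Real.sqrt q) *
          (1 / Real.sqrt (Fintype.card Y) * (1 / Real.sqrt (Fintype.card Q))) := by
      simp only [← Finset.sum_mul]
      congr 1
      rw [Finset.sum_congr rfl fun y _ => (eq_div_iff hsq0.ne').2
        ((mul_comm _ _).trans (hcol y))]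
      simp
    rw [h1]
    refine Real.sqrt_le_iff.2 ⟨by positivity, ?_⟩
    have h2 : (Fintype.card Y * (D / Real.sqrt q) *
          (1 / Real.sqrt (Fintype.card Y) * (1 / Real.sqrt (Fintype.card Q)))) ^ 2 =
        Fintype.card Y * D ^ 2 / (q * Fintype.card Q) := by
      rw [mul_pow, mul_pow, mul_pow, div_pow, div_pow, div_pow, Real.sq_sqrt hq0.le,
        Real.sq_sqrt hY0.le, Real.sq_sqrt hQ0.le]
      field_simp
    rw [h2, hQcard, le_div_iff₀ (by positivity)]
    nlinarith [mul_le_mul_of_nonneg_left hYcard (sq_nonneg D)]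
  · intro e
    have h1 : OpBound (projMat s (diffCoef (kCoef r) e.1))
        (Real.sqrt (k * ((r : ℝ) ^ (k - 1) + (n : ℝ) ^ k / (r : ℝ) ^ 2))) := by
      refine OpBound.of_sq (Real.sqrt_pos.2 hμ0) fun v => ?_
      rw [Real.sq_sqrt hμ0.le]
      exact projMat_sq_le pos hs (hcoef' e.1) (sum_diffCoef_sq_le hr e.1) v
    have h2 := ((h1.transpose).bicolor (fun y => dualRail y e) (fun z => dualRail z.2 e)).comap
      (f := fun y : Y => y.1) (g := fun z : Q => z.1) Subtype.val_injective Subtype.val_injective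
    convert h2 using 3 with y z
    unfold diffPart
    split_ifs with h
    · rfl
    · refine projMat_eq_of_ne s _ fun h' => h ?_
      simp only [dualRail, h']

/-- The parameters used below. -/
lemma hasAdv_noKSum_pow {k m w : ℕ} (hk : 0 < k) (hm : 0 < m)
    (hw : 2 * m ^ ((k + 1) * k) ≤ 2 ^ w) :
    HasAdv (noKSum k (m ^ (k + 1)) w) ((m : ℝ) ^ k / (2 * k)) := by
  have h := hasAdv_noKSum (k := k) (n := m ^ (k + 1)) (w := w) (r := m ^ k) hk (by positivity)
    (by positivity) (by rwa [← pow_mul])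
  have hk' : (1 : ℝ) ≤ k := by exact_mod_cast hk
  have hm' : (0 : ℝ) < m := by exact_mod_cast hm
  refine h.mono (by positivity) ?_
  push_cast
  rw [le_div_iff₀ (by positivity)]
  refine Real.le_sqrt_of_sq_le ?_
  rw [mul_pow, Real.sq_sqrt (by positivity)]
  obtain ⟨j, rfl⟩ : ∃ j, k = j + 1 := ⟨k - 1, by omega⟩
  have e1 : ((m : ℝ) ^ (j + 1 + 1)) ^ (j + 1) =
      ((m : ℝ) ^ (j + 1)) ^ (j + 1 - 1) * ((m : ℝ) ^ (j + 1)) ^ 2 := by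
    rw [← pow_add, ← pow_mul, ← pow_mul]
    congr 1
    simp
    ring
  rw [e1]
  set a := (m : ℝ) ^ (j + 1) with ha
  have ha0 : 0 < a := by positivity
  set c := a ^ (j + 1 - 1) with hc
  have hc0 : 0 < c := by positivity
  set κ : ℝ := ((j + 1 : ℕ) : ℝ) with hκ
  have e2 : (a / (2 * κ)) ^ 2 * (κ * (c + c * a ^ 2 / a ^ 2)) = c * a ^ 2 / 2 / κ := by
    field_simp
    ring
  rw [e2]
  exact div_le_self (by positivity) hk'

end Bound

end QC

/-! ### Degree of real functions on the Boolean cube, and low-degree certificates -/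

namespace QC

/-- The real number `0` or `1` given by a Boolean value. -/
def bit (b : Bool) : ℝ := if b then 1 else 0

/-- `f` is given on the Boolean cube by a polynomial of degree at most `d`. -/
def BDeg {I : Type} (f : (I → Bool) → ℝ) (d : ℕ) : Prop :=
  ∃ p : MvPolynomial I ℝ, p.totalDegree ≤ d ∧ ∀ z, MvPolynomial.eval (fun i => bit (z i)) p = f z

namespace BDeg

variable {I J : Type} {f g : (I → Bool) → ℝ} {d e : ℕ}

lemma mono (h : BDeg f d) (hde : d ≤ e) : BDeg f e := by
  obtain ⟨p, hp, h⟩ := h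
  exact ⟨p, hp.trans hde, h⟩

lemma const (c : ℝ) : BDeg (fun _ : I → Bool => c) 0 :=
  ⟨MvPolynomial.C c, by simp, by simp⟩

lemma var (i : I) : BDeg (fun z => bit (z i)) 1 :=
  ⟨MvPolynomial.X i, by simp, by simp⟩

lemma add (hf : BDeg f d) (hg : BDeg g d) : BDeg (fun z => f z + g z) d := by
  obtain ⟨p, hp, hf⟩ := hf
  obtain ⟨q, hq, hg⟩ := hg
  exact ⟨p + q, (MvPolynomial.totalDegree_add _ _).trans (max_le hp hq), by simp [hf, hg]⟩

lemma mul (hf : BDeg f d) (hg : BDeg g e) : BDeg (fun z => f z * g z) (d + e) := by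
  obtain ⟨p, hp, hf⟩ := hf
  obtain ⟨q, hq, hg⟩ := hg
  exact ⟨p * q, (MvPolynomial.totalDegree_mul _ _).trans (add_le_add hp hq), by simp [hf, hg]⟩

lemma sum {T : Type} (s : Finset T) {f : T → (I → Bool) → ℝ} (h : ∀ t ∈ s, BDeg (f t) d) :
    BDeg (fun z => ∑ t ∈ s, f t z) d := by
  classical
  induction s using Finset.induction_on with
  | empty => simpa using (const (I := I) 0).mono (Nat.zero_le d)
  | insert a s ha ih =>
    have h1 := (h a (Finset.mem_insert_self _ _)).add
      (ih fun t ht => h t (Finset.mem_insert_of_mem ht))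
    simpa only [Finset.sum_insert ha] using h1

lemma prod {T : Type} (s : Finset T) {f : T → (I → Bool) → ℝ} (h : ∀ t ∈ s, BDeg (f t) d) :
    BDeg (fun z => ∏ t ∈ s, f t z) (s.card * d) := by
  classical
  induction s using Finset.induction_on with
  | empty => simpa using const (I := I) 1
  | insert a s ha ih =>
    have h1 := (h a (Finset.mem_insert_self _ _)).mul
      (ih fun t ht => h t (Finset.mem_insert_of_mem ht))
    simp only [Finset.prod_insert ha]
    refine h1.mono ?_
    rw [Finset.card_insert_of_notMem ha, add_mul, one_mul, add_comm]

lemma pow (hf : BDeg f d) (n : ℕ) : BDeg (fun z => f z ^ n) (n * d) := by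
  simpa using prod (Finset.range n) fun _ _ => hf

lemma poly (hf : BDeg f d) (r : Polynomial ℝ) : BDeg (fun z => r.eval (f z)) (r.natDegree * d) := by
  simp only [Polynomial.eval_eq_sum_range]
  refine sum _ fun i hi => ?_
  have h := (const (I := I) (r.coeff i)).mul (hf.pow i)
  refine h.mono ?_
  rw [zero_add]
  exact Nat.mul_le_mul_right _ (Nat.lt_succ_iff.1 (Finset.mem_range.1 hi))

lemma comap (hf : BDeg f d) (ι : I → J) : BDeg (fun z : J → Bool => f fun i => z (ι i)) d := by
  obtain ⟨p, hp, hf⟩ := hf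
  refine ⟨MvPolynomial.rename ι p, (MvPolynomial.totalDegree_rename_le _ _).trans hp, fun z => ?_⟩
  rw [MvPolynomial.eval_rename]
  exact hf _

lemma literal (i : I) (b : Bool) : BDeg (fun z => if z i = b then 1 else 0) 1 := by
  cases b
  · have h := ((const (I := I) 1).mono zero_le_one).add ((const (I := I) (-1)).mul (var i))
    convert h using 2 with z
    cases z i <;> simp [bit]
  · exact var i

/-- A case distinction on finitely many coordinates. -/
lemma cases {A : Type} [Fintype A] [DecidableEq A] (ι : A → I) {f : (A → Bool) → (I → Bool) → ℝ}
    (h : ∀ g, BDeg (f g) d) : BDeg (fun z => f (fun a => z (ι a)) z) (Fintype.card A + d) := by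
  have h1 : ∀ g : A → Bool, BDeg (fun z => (∏ a, if z (ι a) = g a then (1 : ℝ) else 0) * f g z)
      (Fintype.card A + d) := by
    intro g
    have := (prod Finset.univ (f := fun a z => if z (ι a) = g a then (1 : ℝ) else 0)
      fun a _ => literal (ι a) (g a)).mul (h g)
    simpa using this
  have h2 := sum Finset.univ fun g _ => h1 g
  convert h2 using 2 with z
  rw [Finset.sum_eq_single fun a => z (ι a)]
  · simp
  · intro g _ hg
    obtain ⟨a, ha⟩ := Function.ne_iff.1 hg
    rw [Finset.prod_eq_zero (Finset.mem_univ a), zero_mul]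
    rw [if_neg (Ne.symm ha)]
  · simp

end BDeg

/-- The inputs with `F x = b` are those having a certificate that passes at most `M` checks, each
of degree at most `s`. -/
def HasCert {I : Type} (F : (I → Bool) → Bool) (b : Bool) (M s : ℕ) : Prop :=
  ∃ (Y P : Type) (_ : Fintype Y) (_ : Fintype P) (_ : Nonempty P)
    (chk : P → (I ⊕ Y → Bool) → Bool), Fintype.card P ≤ M ∧ (∀ p, BDeg (fun z => bit (chk p z)) s) ∧
      ∀ x, F x = b ↔ ∃ y : Y → Bool, ∀ p, chk p (Sum.elim x y) = true

lemma hasCert_id (b : Bool) : HasCert (fun z : Unit → Bool => z ()) b 1 1 := by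
  refine ⟨Empty, Unit, inferInstance, inferInstance, inferInstance,
    fun _ z => decide (z (Sum.inl ()) = b), by simp, fun _ => ?_, fun x => ?_⟩
  · convert BDeg.literal (Sum.inl () : Unit ⊕ Empty) b using 2 with z
    simp [bit]
  · constructor
    · intro h
      exact ⟨Empty.elim, fun _ => decide_eq_true h⟩
    · rintro ⟨y, hy⟩
      exact of_decide_eq_true (hy ())

lemma HasCert.mono {I : Type} {F : (I → Bool) → Bool} {b : Bool} {M M' s s' : ℕ}
    (h : HasCert F b M s) (hM : M ≤ M') (hs : s ≤ s') : HasCert F b M' s' := by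
  obtain ⟨Y, P, i1, i2, i3, chk, h1, h2, h3⟩ := h
  exact ⟨Y, P, i1, i2, i3, chk, h1.trans hM, fun p => (h2 p).mono hs, h3⟩

/-- The inputs with value `b` of `H` are described by a selection of positions of value `!b`. -/
lemma HasCert.bcomp {E I A P₀ : Type} [Fintype E] [Fintype A] [DecidableEq A] [Fintype P₀]
    [Nonempty P₀] {H : (E → Bool) → Bool} {F : (I → Bool) → Bool} {b : Bool} {M s : ℕ}
    {ok : (A → Bool) → Prop} {sel : (A → Bool) → P₀ → Option E}
    (hH : ∀ w, H w = b ↔ ∃ g, ok g ∧ ∀ p e, sel g p = some e → w e = !b)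
    (hF : HasCert F (!b) M s) :
    HasCert (bcomp H F) b (Fintype.card P₀ * M) (Fintype.card A + s) := by
  classical
  obtain ⟨Y, P, _, _, _, chk, hM, hs, hcert⟩ := hF

  let pull : E → I ⊕ Y → (E × I) ⊕ (A ⊕ E × Y) := fun e =>
    Sum.elim (fun i => Sum.inl (e, i)) (fun y => Sum.inr (Sum.inr (e, y)))
  let chk' : P₀ × P → ((E × I) ⊕ (A ⊕ E × Y) → Bool) → Bool := fun q z =>
    ofProp (ok fun a => z (Sum.inr (Sum.inl a))) &&
      (match sel (fun a => z (Sum.inr (Sum.inl a))) q.1 with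
        | none => true
        | some e => chk q.2 fun i => z (pull e i))
  refine ⟨A ⊕ E × Y, P₀ × P, inferInstance, inferInstance, inferInstance, chk', ?_, ?_, ?_⟩
  · rw [Fintype.card_prod]
    exact Nat.mul_le_mul_left _ hM
  · intro q
    refine BDeg.cases (fun a => Sum.inr (Sum.inl a)) (f := fun g z => bit (ofProp (ok g) &&
      (match sel g q.1 with
        | none => true
        | some e => chk q.2 fun i => z (pull e i)))) fun g => ?_
    cases ofProp (ok g)
    · exact (BDeg.const 0).mono (Nat.zero_le _)
    · rcases sel g q.1 with _ | e
      · exact (BDeg.const 1).mono (Nat.zero_le _)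
      · exact (hs q.2).comap (pull e)
  · intro x
    rw [QC.bcomp, hH]
    have hpull : ∀ (y : A ⊕ E × Y → Bool) (e : E), (fun i => Sum.elim x y (pull e i)) =
        Sum.elim (fun i => x (e, i)) (fun i => y (Sum.inr (e, i))) := by
      intro y e
      funext i
      rcases i with i | i <;> rfl
    constructor
    · rintro ⟨g, hok, hg⟩
      have h1 : ∀ e, ∃ y : Y → Bool, (F (fun i => x (e, i)) = !b) →
          ∀ p, chk p (Sum.elim (fun i => x (e, i)) y) = true := by
        intro e
        by_cases he : F (fun i => x (e, i)) = !b
        · obtain ⟨y, hy⟩ := (hcert _).1 he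
          exact ⟨y, fun _ => hy⟩
        · exact ⟨fun _ => false, fun h => absurd h he⟩
      choose y hy using h1
      refine ⟨Sum.elim g fun q => y q.1 q.2, fun q => ?_⟩
      simp only [chk', Sum.elim_inr, Sum.elim_inl, Bool.and_eq_true]
      refine ⟨ofProp_eq_true_iff.2 hok, ?_⟩
      rcases hq : sel g q.1 with _ | e
      · rfl
      · simp only [hpull]
        exact hy e (hg _ _ hq) _
    · rintro ⟨y, hy⟩
      obtain ⟨p₀⟩ := ‹Nonempty P₀›
      obtain ⟨p⟩ := ‹Nonempty P›
      simp only [chk', Sum.elim_inr, Bool.and_eq_true] at hy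
      refine ⟨fun a => y (Sum.inl a), ofProp_eq_true_iff.1 (hy (p₀, p)).1, fun q e hq => ?_⟩
      refine (hcert _).2 ⟨fun i => y (Sum.inr (e, i)), fun p' => ?_⟩
      have := (hy (q, p')).2
      simp only [hq, hpull] at this
      exact this

lemma KSum.mono {k n w : ℕ} {z z' : KSumIdx k n w → Bool} (h : KSum z)
    (hz : ∀ e, z e = true → z' e = true) : KSum z' := by
  obtain ⟨σ, a, ha, h⟩ := h
  exact ⟨σ, a, ha, fun t b => hz _ (h t b)⟩

lemma noKSum_eq_true_iff {k n w : ℕ} (z : KSumIdx k n w → Bool) :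
    noKSum k n w z = true ↔ ∃ g : KSumIdx k n w → Bool, (¬ KSum fun e => !g e) ∧
      ∀ p e, (if g p then some p else none) = some e → z e = !true := by
  rw [noKSum, ofProp_eq_true_iff]
  constructor
  · intro h
    refine ⟨fun e => !z e, by simpa using h, fun p e hpe => ?_⟩
    split_ifs at hpe with hp
    · cases hpe
      simpa using hp
  · rintro ⟨g, hg, h⟩ hz
    refine hg (hz.mono fun e he => ?_)
    by_contra hge
    have hge' : g e = true := by simpa using hge
    have := h e e (by simp [hge'])
    simp [this] at he

/-- Decode a one-hot selection. -/
noncomputable def oneHot {P E : Type} (g : P × E → Bool) (p : P) : Option E :=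
  open Classical in if h : ∃ e, g (p, e) = true then some h.choose else none

lemma oneHot_decide {P E : Type} [DecidableEq E] (t : P → E) (p : P) :
    oneHot (fun q => decide (q.2 = t q.1)) p = some (t p) := by
  have h : ∃ e, (fun q : P × E => decide (q.2 = t q.1)) (p, e) = true := ⟨t p, by simp⟩
  rw [oneHot, dif_pos h]
  simp

lemma noKSum_eq_false_iff {k n w : ℕ} (z : KSumIdx k n w → Bool) :
    noKSum k n w z = false ↔ ∃ g : (Fin k × Fin w) × KSumIdx k n w → Bool,
      (∃ (σ : Fin k → Fin n) (a : Fin k → Fin w → ZMod 2), ∑ t, a t = 0 ∧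
        ∀ t b, oneHot g (t, b) = some ((t, σ t), b, a t b)) ∧
      ∀ p e, oneHot g p = some e → z e = !false := by
  rw [noKSum, ofProp_eq_false_iff, not_not]
  constructor
  · rintro ⟨σ, a, ha, h⟩
    refine ⟨fun q => decide (q.2 = ((q.1.1, σ q.1.1), q.1.2, a q.1.1 q.1.2)),
      ⟨σ, a, ha, fun t b => ?_⟩, fun p e hpe => ?_⟩
    · exact oneHot_decide (fun p : Fin k × Fin w =>
        (((p.1, σ p.1), p.2, a p.1 p.2) : KSumIdx k n w)) (t, b)
    · have := oneHot_decide (fun p : Fin k × Fin w =>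
        (((p.1, σ p.1), p.2, a p.1 p.2) : KSumIdx k n w)) p
      rw [hpe] at this
      rw [Option.some.inj this]
      exact h _ _
  · rintro ⟨g, ⟨σ, a, ha, h⟩, h'⟩
    exact ⟨σ, a, ha, fun t b => h' _ _ (h t b)⟩

/-- Iterated composition of the `k`-sum function: large adversary value, cheap certificates. -/
lemma exists_adv_cert {k m w : ℕ} (hk : 0 < k) (hm : 0 < m) (hw0 : 0 < w)
    (hw : 2 * m ^ ((k + 1) * k) ≤ 2 ^ w) (d : ℕ) :
    ∃ (I : Type) (_ : Fintype I) (F : (I → Bool) → Bool),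
      HasAdv F (((m : ℝ) ^ k / (2 * k)) ^ (2 * d)) ∧
      ∀ b, HasCert F b ((2 * k ^ 2 * w ^ 2 * m ^ (k + 1)) ^ d)
        (1 + 2 * d * (2 * k ^ 2 * w ^ 2 * m ^ (k + 1))) := by
  classical
  have hE : Fintype.card (KSumIdx k (m ^ (k + 1)) w) = 2 * k * w * m ^ (k + 1) := by
    simp [Fintype.card_prod, ZMod.card]
    ring
  have hκ : Fintype.card (Fin k × Fin w) = k * w := by simp
  have hEκ : Fintype.card ((Fin k × Fin w) × KSumIdx k (m ^ (k + 1)) w) =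
      2 * k ^ 2 * w ^ 2 * m ^ (k + 1) := by
    rw [Fintype.card_prod, hE, hκ]
    ring
  have hEle : 2 * k * w * m ^ (k + 1) ≤ 2 * k ^ 2 * w ^ 2 * m ^ (k + 1) := by
    have : 1 ≤ k * w := Nat.mul_pos hk hw0
    calc 2 * k * w * m ^ (k + 1) = 1 * (2 * k * w * m ^ (k + 1)) := (one_mul _).symm
      _ ≤ (k * w) * (2 * k * w * m ^ (k + 1)) := Nat.mul_le_mul_right _ this
      _ = _ := by ring
  have hk' : (0 : ℝ) < k := by exact_mod_cast hk
  have hm' : (0 : ℝ) < m := by exact_mod_cast hm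
  have : Nonempty (Fin k) := ⟨⟨0, hk⟩⟩
  have : Nonempty (Fin w) := ⟨⟨0, hw0⟩⟩
  have : Nonempty (Fin (m ^ (k + 1))) := ⟨⟨0, by positivity⟩⟩
  have hcT : ∀ {I : Type} {F : (I → Bool) → Bool} {M s : ℕ}, HasCert F false M s →
      HasCert (bcomp (noKSum k (m ^ (k + 1)) w) F) true ((2 * k * w * m ^ (k + 1)) * M)
        (2 * k * w * m ^ (k + 1) + s) := by
    intro I F M s h
    have := HasCert.bcomp (b := true) (P₀ := KSumIdx k (m ^ (k + 1)) w) noKSum_eq_true_iff h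
    rwa [hE] at this
  have hcF : ∀ {I : Type} {F : (I → Bool) → Bool} {M s : ℕ}, HasCert F true M s →
      HasCert (bcomp (noKSum k (m ^ (k + 1)) w) F) false ((k * w) * M)
        (2 * k ^ 2 * w ^ 2 * m ^ (k + 1) + s) := by
    intro I F M s h
    have := HasCert.bcomp (b := false) (P₀ := Fin k × Fin w)
      (noKSum_eq_false_iff (n := m ^ (k + 1))) h
    rwa [hEκ, hκ] at this
  induction d with
  | zero =>
    refine ⟨Unit, inferInstance, fun z => z (), by simpa using hasAdv_id, fun b => ?_⟩
    simpa using hasCert_id b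
  | succ d ih =>
    obtain ⟨I, _, F, hA, hC⟩ := ih
    have hH := hasAdv_noKSum_pow hk hm hw
    refine ⟨_, inferInstance, bcomp (noKSum k (m ^ (k + 1)) w) (bcomp (noKSum k (m ^ (k + 1)) w) F),
      ?_, fun b => ?_⟩
    · have h := hH.bcomp (hH.bcomp hA (by positivity)) (by positivity)
      convert h using 1
      ring
    · cases b
      · refine (hcF (hcT (hC false))).mono (le_of_eq (by ring)) ?_
        nlinarith
      · refine (hcT (hcF (hC true))).mono (le_of_eq (by ring)) ?_
        nlinarith

end QC

/-! ### A polynomial separating zero from small positive integers -/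

namespace QC

lemma chebyshev_T_growth {δ : ℝ} (hδ : 0 ≤ δ) (n : ℕ) :
    1 + (n : ℝ) ^ 2 * δ ≤ (Polynomial.Chebyshev.T ℝ n).eval (1 + δ) ∧
      (2 * (n : ℝ) + 1) * δ ≤ (Polynomial.Chebyshev.T ℝ (n + 1 : ℕ)).eval (1 + δ) -
        (Polynomial.Chebyshev.T ℝ n).eval (1 + δ) := by
  induction n with
  | zero => simp
  | succ n ih =>
    obtain ⟨h1, h2⟩ := ih
    have h3 : 1 + ((n + 1 : ℕ) : ℝ) ^ 2 * δ ≤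
        (Polynomial.Chebyshev.T ℝ (n + 1 : ℕ)).eval (1 + δ) := by
      push_cast at h1 h2 ⊢
      nlinarith
    refine ⟨h3, ?_⟩
    have h4 : (Polynomial.Chebyshev.T ℝ (n + 1 + 1 : ℕ)).eval (1 + δ) =
        2 * (1 + δ) * (Polynomial.Chebyshev.T ℝ (n + 1 : ℕ)).eval (1 + δ) -
          (Polynomial.Chebyshev.T ℝ n).eval (1 + δ) := by
      have := Polynomial.Chebyshev.T_add_two ℝ n
      have e : ((n + 1 + 1 : ℕ) : ℤ) = (n : ℤ) + 2 := by push_cast; ring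
      rw [e, this]
      simp
    rw [h4]
    have h5 : 1 ≤ (Polynomial.Chebyshev.T ℝ (n + 1 : ℕ)).eval (1 + δ) := by
      refine le_trans ?_ h3
      have : (0 : ℝ) ≤ ((n + 1 : ℕ) : ℝ) ^ 2 * δ := by positivity
      linarith
    have h6 : δ ≤ δ * (Polynomial.Chebyshev.T ℝ (n + 1 : ℕ)).eval (1 + δ) :=
      le_mul_of_one_le_right hδ h5
    push_cast at h2 h6 ⊢
    linarith

lemma exists_separating_poly (M e : ℕ) (hM : 0 < M) : ∃ r : Polynomial ℝ,
    r.natDegree ≤ e * (Nat.sqrt M + 1) ∧ r.eval 0 = 1 ∧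
      ∀ j : ℕ, 1 ≤ j → j ≤ M → |r.eval (j : ℝ)| ≤ (1 / 2) ^ e := by
  have hM' : (0 : ℝ) < M := by exact_mod_cast hM
  set D := Nat.sqrt M + 1 with hD
  set T := Polynomial.Chebyshev.T ℝ (D : ℕ) with hT
  set u : Polynomial ℝ := Polynomial.C (1 + 1 / (M : ℝ)) - Polynomial.C (1 / (M : ℝ)) * Polynomial.X
    with hu
  set c := T.eval (1 + 1 / (M : ℝ)) with hc
  have hc2 : 2 ≤ c := by
    have h1 := (chebyshev_T_growth (δ := 1 / (M : ℝ)) (by positivity) D).1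
    have h2 : (M : ℝ) ≤ (D : ℝ) ^ 2 := by

      have h3 : M ≤ D ^ 2 := by
        rw [hD, pow_two]
        exact (Nat.lt_succ_sqrt M).le
      exact_mod_cast h3
    have h3 : 1 ≤ (D : ℝ) ^ 2 * (1 / M) := by
      rw [mul_one_div, one_le_div hM']
      exact h2
    linarith
  have hu1 : u.natDegree ≤ 1 := by
    rw [hu]
    compute_degree
  refine ⟨(Polynomial.C (1 / c) * T.comp u) ^ e, ?_, ?_, ?_⟩
  · refine Polynomial.natDegree_pow_le.trans (Nat.mul_le_mul_left _ ?_)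
    refine (Polynomial.natDegree_C_mul_le _ _).trans ?_
    refine Polynomial.natDegree_comp_le.trans ?_
    have h1 : T.natDegree = D := by
      rw [hT, Polynomial.Chebyshev.natDegree_T]
      simp
    rw [h1]
    nlinarith
  · have : (T.comp u).eval 0 = c := by
      rw [Polynomial.eval_comp, hc, hu]
      simp
    rw [Polynomial.eval_pow, Polynomial.eval_mul, this, Polynomial.eval_C, one_div,
      inv_mul_cancel₀ (by linarith), one_pow]
  · intro j hj hjM
    rw [Polynomial.eval_pow, abs_pow]
    refine pow_le_pow_left₀ (abs_nonneg _) ?_ e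
    rw [Polynomial.eval_mul, Polynomial.eval_C, abs_mul, Polynomial.eval_comp]
    have hj1 : (1 : ℝ) ≤ j := by exact_mod_cast hj
    have hj2 : (j : ℝ) ≤ M := by exact_mod_cast hjM
    have h1 : |u.eval (j : ℝ)| ≤ 1 := by
      have : u.eval (j : ℝ) = 1 - (j - 1) / M := by
        rw [hu]
        simp
        ring
      rw [this, abs_le]
      have h2 : ((j : ℝ) - 1) / M ≤ 1 := by
        rw [div_le_one hM']
        linarith
      have h3 : 0 ≤ ((j : ℝ) - 1) / M := div_nonneg (by linarith) hM'.le
      constructor <;> linarith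
    have h2 : |T.eval (u.eval (j : ℝ))| ≤ 1 := Polynomial.Chebyshev.abs_eval_T_real_le_one _ h1
    have h3 : |1 / c| ≤ 1 / 2 := by
      rw [abs_of_pos (by positivity)]
      exact one_div_le_one_div_of_le two_pos hc2
    calc |1 / c| * |T.eval (u.eval (j : ℝ))| ≤ 1 / 2 * 1 :=
          mul_le_mul h3 h2 (abs_nonneg _) (by norm_num)
      _ = 1 / 2 := mul_one _

end QC

/-! ### Approximate degree of total functions -/

namespace QC

/-- The total function on `n` bits given by a Boolean function. -/
def lift {n : ℕ} (g : (Fin n → Bool) → Bool) : PartialFn (Fin n) fun _ => 2 :=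
  fun x => some (g fun i => decide (x i = 1))

lemma decide_ite_one (b : Bool) : decide ((if b then (1 : Fin 2) else 0) = 1) = b := by
  cases b <;> rfl

lemma fin_two_cast (a : Fin 2) : (((a : ℕ) : ℝ)) = bit (decide (a = 1)) := by
  fin_cases a <;> simp [bit]

lemma adegq_lift_le {n d : ℕ} {g : (Fin n → Bool) → Bool} {h : (Fin n → Bool) → ℝ}
    (hd : BDeg h d) (hg : ∀ z, |h z - bit (g z)| ≤ 1 / 3) : adegq (lift g) ≤ d := by
  obtain ⟨p, hp, hph⟩ := hd
  refine Nat.sInf_le ⟨p, hp, ?_⟩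
  intro x b hb
  have hb' : g (fun i => decide (x i = 1)) = b := Option.some.inj hb
  have h1 := hg fun i => decide (x i = 1)
  rw [← hph, hb'] at h1
  simp only [fin_two_cast]
  exact h1

/-- Flip one coordinate. -/
def flip {I : Type} [DecidableEq I] (i : I) (z : I → Bool) : I → Bool := Function.update z i (!z i)

lemma flip_flip {I : Type} [DecidableEq I] (i : I) (z : I → Bool) : flip i (flip i z) = z := by
  simp [flip]

lemma sum_sign_mul_eval {n : ℕ} {g : (Fin n → Bool) → Bool} {T : Finset (Fin n)}
    (hT : ∀ i ∈ T, ∀ z, g (flip i z) = !g z) {p : MvPolynomial (Fin n) ℝ}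
    (hp : p.totalDegree < T.card) :
    ∑ z : Fin n → Bool, (1 - 2 * bit (g z)) * MvPolynomial.eval (fun i => bit (z i)) p = 0 := by
  simp only [MvPolynomial.eval_eq, Finset.mul_sum]
  rw [Finset.sum_comm]
  refine Finset.sum_eq_zero fun m hm => ?_
  have hcard : m.support.card < T.card := by
    refine lt_of_le_of_lt ?_ (lt_of_le_of_lt (MvPolynomial.le_totalDegree hm) hp)
    rw [Finsupp.sum, Finset.card_eq_sum_ones]
    refine Finset.sum_le_sum fun i hi => ?_
    exact Nat.one_le_iff_ne_zero.2 (Finsupp.mem_support_iff.1 hi)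
  obtain ⟨i, hiT, him⟩ := Finset.exists_mem_notMem_of_card_lt_card hcard
  have h1 : ∀ G : (Fin n → Bool) → ℝ, (∀ z, G (flip i z) = - G z) → ∑ z, G z = 0 := by
    intro G hG
    have h2 : ∑ z, G (flip i z) = ∑ z, G z :=
      Equiv.sum_comp (Function.Involutive.toPerm (flip i) (flip_flip i)) G
    simp only [hG, Finset.sum_neg_distrib] at h2
    linarith
  refine h1 _ fun z => ?_
  have h2 : ∏ j ∈ m.support, bit (flip i z j) ^ m j = ∏ j ∈ m.support, bit (z j) ^ m j := by
    refine Finset.prod_congr rfl fun j hj => ?_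
    rw [flip, Function.update_of_ne]
    rintro rfl
    exact him hj
  rw [h2, hT i hiT]
  cases g z <;> simp [bit] <;> ring

lemma card_le_adegq_lift {n : ℕ} {g : (Fin n → Bool) → Bool} {T : Finset (Fin n)}
    (hT : ∀ i ∈ T, ∀ z, g (flip i z) = !g z) : T.card ≤ adegq (lift g) := by
  have hne : {d | ∃ p : MvPolynomial (Fin n) ℝ, p.totalDegree ≤ d ∧
      ∀ (x : Input (Fin n) fun _ => 2) b, lift g x = some b →
        |MvPolynomial.eval (fun i => ((x i : ℕ) : ℝ)) p - if b then 1 else 0| ≤ 1 / 3}.Nonempty := by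
    obtain ⟨p, hp, hpg⟩ := BDeg.cases (fun i : Fin n => i) (f := fun z _ => bit (g z))
      fun z => BDeg.const (I := Fin n) (bit (g z))
    refine ⟨_, p, hp, fun x b hb => ?_⟩
    have hb' : g (fun i => decide (x i = 1)) = b := Option.some.inj hb
    simp only [fin_two_cast]
    rw [hpg]
    have h : bit (g fun i => decide (x i = 1)) = if b then 1 else 0 := congrArg bit hb'
    refine le_of_eq_of_le (congrArg abs (sub_eq_zero.2 h)) ?_
    norm_num
  obtain ⟨p, hp, hpg⟩ := Nat.sInf_mem hne
  refine le_trans ?_ (show sInf _ ≤ adegq (lift g) from le_rfl)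
  by_contra hlt
  have hlt' := lt_of_le_of_lt hp (not_le.1 hlt)
  have h1 := sum_sign_mul_eval hT hlt'
  have h2 := sum_sign_mul_eval hT (p := MvPolynomial.C 1) (by
    rw [MvPolynomial.totalDegree_C]
    exact lt_of_le_of_lt (Nat.zero_le _) hlt')
  simp only [MvPolynomial.eval_C, mul_one] at h2
  have h3 : ∀ z : Fin n → Bool, 0 < (1 - 2 * bit (g z)) -
      2 * ((1 - 2 * bit (g z)) * MvPolynomial.eval (fun i => bit (z i)) p) := by
    intro z
    have h4 := hpg (fun i => if z i then 1 else 0) (g z) (by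
      simp only [lift]
      congr 2
      funext i
      exact decide_ite_one (z i))
    simp only [fin_two_cast] at h4
    have h5 : (fun i => bit (decide ((if z i then (1 : Fin 2) else 0) = 1))) = fun i => bit (z i) := by
      funext i
      cases z i <;> simp
    rw [h5] at h4
    rw [abs_le] at h4
    cases hgz : g z
    · simp only [hgz, bit, Bool.false_eq_true, if_false] at h4 ⊢
      linarith [h4.1, h4.2]
    · simp only [hgz, bit, if_true] at h4 ⊢
      linarith [h4.1, h4.2]
  have h6 : 0 < ∑ z : Fin n → Bool, ((1 - 2 * bit (g z)) -
      2 * ((1 - 2 * bit (g z)) * MvPolynomial.eval (fun i => bit (z i)) p)) :=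
    Finset.sum_pos (fun z _ => h3 z) Finset.univ_nonempty
  rw [Finset.sum_sub_distrib, ← Finset.mul_sum, h1, h2] at h6
  simp at h6

/-- The adversary lower bound for a function embedded into a larger cube. -/
lemma one_le_Qq_lift {n : ℕ} (hn : n ≠ 0) {N R C : Type} [Fintype R] [Fintype C] {ι : N → Fin n}
    (hι : Function.Injective ι) {f : (N → Bool) → Bool} {X : R → N → Bool} {Y : C → N → Bool}
    {K : R → C → ℝ} {μ : ℝ} (hX : ∀ r, f (X r) = true)
    (hY : ∀ c, f (Y c) = false) (hK : OpBound K 1) {u : R → ℝ} {v : C → ℝ}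
    (hu : ∑ r, u r ^ 2 = 1) (hv : ∑ c, v c ^ 2 = 1)
    (huv : ∑ r, ∑ c, K r c * (u r * v c) = 1) (hμ : ∀ i, OpBound (diffPart X Y K i) μ)
    (hμ0 : 0 ≤ μ) : 1 ≤ 40 * μ * Qq (lift fun z : Fin n → Bool => f fun i => z (ι i)) := by
  let ext : (N → Bool) → Fin n → Fin 2 := fun z =>
    Function.extend ι (fun i => if z i then 1 else 0) fun _ => 0
  have hext : ∀ z i, ext z (ι i) = if z i then 1 else 0 := fun z i => hι.extend_apply _ _ i
  have hlift : ∀ z, lift (fun z : Fin n → Bool => f fun i => z (ι i)) (ext z) = some (f z) := by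
    intro z
    simp only [lift, hext]
    congr 2
    funext i
    cases z i <;> simp
  refine one_le_Qq hn (X := fun r => ext (X r)) (Y := fun c => ext (Y c)) (K := K)
    (fun r => by rw [hlift, hX]) (fun c => by rw [hlift, hY]) hK hu hv huv (fun i => ?_) hμ0
  by_cases hi : ∃ i', ι i' = i
  · obtain ⟨i', rfl⟩ := hi
    convert hμ i' using 1
    funext r c
    simp only [diffPart, hext]
    cases X r i' <;> cases Y c i' <;> simp
  · intro p q
    have : ∀ r c, diffPart (fun r => ext (X r)) (fun c => ext (Y c)) K i r c = 0 := by
      intro r c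
      simp only [diffPart, ext, Function.extend_apply' _ _ _ hi, if_true]
    simp only [this, zero_mul, Finset.sum_const_zero, mul_zero]
    positivity

lemma abs_bit_xor_sub (a b : Bool) (g : ℝ) :
    |(1 - (1 - 2 * g) * (1 - 2 * bit b)) / 2 - bit (xor a b)| = |g - bit a| := by
  cases b
  · simp only [bit, Bool.xor_false, Bool.false_eq_true, if_false]
    congr 1
    ring
  · rw [abs_sub_comm g]
    cases a <;> simp only [bit, Bool.xor_true, Bool.not_true, Bool.not_false, Bool.false_eq_true,
      if_false, if_true] <;> congr 1 <;> ring

/-- A disjunction of mutually exclusive conjunctions of low-degree checks. -/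
lemma exists_approx_disjunction {N S : Type} [Fintype S] {Q : S → Type} [∀ σ, Fintype (Q σ)]
    {C : ∀ σ, Q σ → (N → Bool) → Bool} {c M s : ℕ} (hS : Fintype.card S ≤ 2 ^ c) (hM : 0 < M)
    (hQ : ∀ σ, Fintype.card (Q σ) ≤ M) (hs : ∀ σ q, BDeg (fun z => bit (C σ q z)) s)
    (huniq : ∀ z σ σ', (∀ q, C σ q z = true) → (∀ q, C σ' q z = true) → σ = σ') :
    ∃ h : (N → Bool) → ℝ, BDeg h ((c + 2) * (Nat.sqrt M + 1) * s) ∧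
      ∀ z, |h z - bit (ofProp (∃ σ, ∀ q, C σ q z = true))| ≤ 1 / 4 := by
  classical
  obtain ⟨r, hr1, hr2, hr3⟩ := exists_separating_poly M (c + 2) hM
  refine ⟨fun z => ∑ σ, r.eval (∑ q, (1 + (-1) * bit (C σ q z))), ?_, ?_⟩
  · refine BDeg.sum _ fun σ _ => ?_
    have h1 : BDeg (fun z => ∑ q, (1 + (-1) * bit (C σ q z))) s := by
      refine BDeg.sum _ fun q _ => ?_
      refine ((BDeg.const 1).mono (Nat.zero_le _)).add ?_
      simpa using (BDeg.const (-1)).mul (hs σ q)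
    exact (h1.poly r).mono (Nat.mul_le_mul_right _ hr1)
  · intro z
    have hcount : ∀ σ, ∑ q, (1 + (-1) * bit (C σ q z)) =
        ((Finset.univ.filter fun q => ¬ C σ q z = true).card : ℝ) := by
      intro σ
      rw [← Finset.sum_boole]
      refine Finset.sum_congr rfl fun q _ => ?_
      cases C σ q z <;> simp [bit]
    have hgood : ∀ σ, (∀ q, C σ q z = true) → r.eval (∑ q, (1 + (-1) * bit (C σ q z))) = 1 := by
      intro σ h
      simp [h, bit, hr2]
    have hbad : ∀ σ, (¬ ∀ q, C σ q z = true) →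
        |r.eval (∑ q, (1 + (-1) * bit (C σ q z)))| ≤ (1 / 2) ^ (c + 2) := by
      intro σ h
      rw [hcount]
      refine hr3 _ ?_ ((Finset.card_le_univ _).trans (hQ σ))
      obtain ⟨q, hq⟩ := not_forall.1 h
      exact Finset.card_pos.2 ⟨q, by simpa using hq⟩
    have hsum : bit (ofProp (∃ σ, ∀ q, C σ q z = true)) =
        ∑ σ, if ∀ q, C σ q z = true then (1 : ℝ) else 0 := by
      by_cases hex : ∃ σ, ∀ q, C σ q z = true
      · rw [ofProp_eq_true_iff.2 hex]
        obtain ⟨σ, hσ⟩ := hex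
        rw [Finset.sum_eq_single σ]
        · simp [bit, hσ]
        · intro σ' _ hne
          exact if_neg fun h => hne (huniq z _ _ h hσ)
        · simp
      · rw [ofProp_eq_false_iff.2 hex, Finset.sum_eq_zero]
        · simp [bit]
        · intro σ _
          exact if_neg fun h => hex ⟨σ, h⟩
    rw [hsum, ← Finset.sum_sub_distrib]
    refine (Finset.abs_sum_le_sum_abs _ _).trans ?_
    have hterm : ∀ σ, |r.eval (∑ q, (1 + (-1) * bit (C σ q z))) -
        if ∀ q, C σ q z = true then (1 : ℝ) else 0| ≤ (1 / 2) ^ (c + 2) := by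
      intro σ
      split_ifs with h
      · rw [hgood σ h, sub_self, abs_zero]
        positivity
      · rw [sub_zero]
        exact hbad σ h
    refine (Finset.sum_le_sum fun σ _ => hterm σ).trans ?_
    rw [Finset.sum_const, nsmul_eq_mul, Finset.card_univ]
    have h1 : (Fintype.card S : ℝ) ≤ 2 ^ c := by exact_mod_cast hS
    calc (Fintype.card S : ℝ) * (1 / 2) ^ (c + 2) ≤ 2 ^ c * (1 / 2) ^ (c + 2) := by gcongr
      _ = 1 / 4 := by
        rw [pow_add, ← mul_assoc, ← mul_pow]
        norm_num

end QC

/-! ### The cheat sheet construction -/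

namespace QC

lemma OpBound.schur {R C : Type} [Fintype R] [Fintype C] {A : R → C → ℝ} {b : ℝ}
    (hr : ∀ r, ∑ c, |A r c| ≤ b) (hc : ∀ c, ∑ r, |A r c| ≤ b) : OpBound A b := by
  intro p q
  have h1 : ∀ r c, 2 * (A r c * (p r * q c)) ≤ |A r c| * p r ^ 2 + |A r c| * q c ^ 2 := by
    intro r c
    have h2 := le_abs_self (A r c * (p r * q c))
    rw [abs_mul, abs_mul] at h2
    have h3 : 2 * (|p r| * |q c|) ≤ p r ^ 2 + q c ^ 2 := by
      rw [← sq_abs (p r), ← sq_abs (q c)]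
      nlinarith [sq_nonneg (|p r| - |q c|)]
    nlinarith [abs_nonneg (A r c)]
  calc 2 * ∑ r, ∑ c, A r c * (p r * q c)
      = ∑ r, ∑ c, 2 * (A r c * (p r * q c)) := by simp only [Finset.mul_sum]
    _ ≤ ∑ r, ∑ c, (|A r c| * p r ^ 2 + |A r c| * q c ^ 2) :=
        Finset.sum_le_sum fun r _ => Finset.sum_le_sum fun c _ => h1 r c
    _ = ∑ r, (∑ c, |A r c|) * p r ^ 2 + ∑ c, (∑ r, |A r c|) * q c ^ 2 := by
        simp only [Finset.sum_add_distrib, Finset.sum_mul]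
        congr 1
        exact Finset.sum_comm
    _ ≤ ∑ r, b * p r ^ 2 + ∑ c, b * q c ^ 2 := by
        gcongr with r _ c _
        · exact hr r
        · exact hc c
    _ = b * (∑ r, p r ^ 2 + ∑ c, q c ^ 2) := by
        rw [mul_add, Finset.mul_sum, Finset.mul_sum]

lemma OpBound.restrict_rows {R C : Type} [Fintype R] [Fintype C] {A : R → C → ℝ} {b : ℝ}
    (h : OpBound A b) (hb : 0 ≤ b) (t : R → Bool) :
    OpBound (fun r c => if t r then A r c else 0) b := by
  intro p q
  have h1 := h (fun r => if t r then p r else 0) q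
  have h2 : ∑ r, (if t r then p r else 0) ^ 2 ≤ ∑ r, p r ^ 2 := by
    refine Finset.sum_le_sum fun r _ => ?_
    split_ifs
    · exact le_rfl
    · simp
      positivity
  have h3 : ∑ r, ∑ c, A r c * ((if t r then p r else 0) * q c) =
      ∑ r, ∑ c, (if t r then A r c else 0) * (p r * q c) := by
    refine Finset.sum_congr rfl fun r _ => Finset.sum_congr rfl fun c _ => ?_
    split_ifs <;> simp
  rw [h3] at h1
  nlinarith

lemma OpBound.single_row {R C : Type} [Fintype R] [Fintype C] [DecidableEq R] {β : ℝ}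
    (hβ : 0 < β) (hC : (Fintype.card C : ℝ) * β ^ 2 = 1) (r₀ : R) :
    OpBound (fun (r : R) (_ : C) => if r = r₀ then β ^ 2 else 0) β := by
  intro p q
  have e : ∑ r, ∑ c, (if r = r₀ then β ^ 2 else 0) * (p r * q c) = ∑ c, β ^ 2 * (p r₀ * q c) := by
    rw [Finset.sum_eq_single r₀]
    · simp
    · intro r _ hr
      simp [hr]
    · simp
  rw [e]
  have h1 : ∀ c, 2 * (β ^ 2 * (p r₀ * q c)) ≤ β * (β ^ 2 * p r₀ ^ 2 + q c ^ 2) := by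
    intro c
    nlinarith [mul_nonneg hβ.le (sq_nonneg (β * p r₀ - q c))]
  have h2 : p r₀ ^ 2 ≤ ∑ r, p r ^ 2 :=
    Finset.single_le_sum (f := fun r => p r ^ 2) (fun r _ => sq_nonneg _) (Finset.mem_univ r₀)
  calc 2 * ∑ c, β ^ 2 * (p r₀ * q c) = ∑ c, 2 * (β ^ 2 * (p r₀ * q c)) := Finset.mul_sum _ _ _
    _ ≤ ∑ c, β * (β ^ 2 * p r₀ ^ 2 + q c ^ 2) := Finset.sum_le_sum fun c _ => h1 c
    _ = β * (((Fintype.card C : ℝ) * β ^ 2) * p r₀ ^ 2 + ∑ c, q c ^ 2) := by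
        rw [← Finset.mul_sum, Finset.sum_add_distrib, Finset.sum_const, Finset.card_univ,
          nsmul_eq_mul]
        ring
    _ ≤ β * (∑ r, p r ^ 2 + ∑ c, q c ^ 2) := by
        rw [hC, one_mul]
        gcongr

section CheatSheet

variable {I : Type} (Y : Bool → Type) (c : ℕ)

/-- Index set of the cheat sheet function: `c` inputs, and one cell for each address. -/
abbrev CellIdx (I : Type) : Type :=
  (Fin c × I) ⊕ (Fin c → Bool) × (Unit ⊕ Fin c × (Σ b, Y b))

variable {Y c}

/-- The positions read when checking the `j`-th certificate in the cell of address `ℓ`. -/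
def certPos (ℓ : Fin c → Bool) (j : Fin c) : I ⊕ Y (ℓ j) → CellIdx Y c I :=
  Sum.elim (fun i => Sum.inl (j, i)) fun y => Sum.inr (ℓ, Sum.inr (j, ⟨ℓ j, y⟩))

/-- The checks of the cell of address `ℓ`. -/
def cellCheck {P : Bool → Type} (chk : ∀ b, P b → (I ⊕ Y b → Bool) → Bool) (ℓ : Fin c → Bool) :
    Option (Σ j, P (ℓ j)) → (CellIdx Y c I → Bool) → Bool
  | none, z => z (Sum.inr (ℓ, Sum.inl ()))
  | some q, z => chk (ℓ q.1) q.2 fun i => z (certPos ℓ q.1 i)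

lemma exists_cheatSheet [Fintype I] {F : (I → Bool) → Bool} {L : ℝ} (hL : 0 < L)
    (hA : HasAdv F L) {M s : ℕ} (hC : ∀ b, HasCert F b M s) (hs : 0 < s) (h t : ℕ) :
    ∃ N₀, ∀ n, N₀ ≤ n → ∃ g : (Fin n → Bool) → Bool, t ≤ adegq (lift g) ∧
      adegq (lift g) ≤ t + (2 * h + 2) * (Nat.sqrt (2 * h * M + 1) + 1) * s ∧
      ∀ μ : ℝ, 1 / L ≤ μ → (1 / 2) ^ h ≤ μ → 1 ≤ 40 * μ * Qq (lift g) := by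
  classical
  choose Y P hY hP hPne chk hM hdeg hcert using hC
  obtain ⟨S, hSX⟩ := hA
  set c := 2 * h with hc
  let f₀ : (CellIdx Y c I → Bool) → Bool := fun z =>
    ofProp (∃ ℓ, ∀ q, cellCheck chk ℓ q z = true)
  have hvalid : ∀ (z : CellIdx Y c I → Bool) (ℓ : Fin c → Bool),
      (∀ q, cellCheck chk ℓ q z = true) → ∀ j, F (fun i => z (Sum.inl (j, i))) = ℓ j := by
    intro z ℓ hz j
    refine (hcert (ℓ j) _).2 ⟨fun y => z (Sum.inr (ℓ, Sum.inr (j, ⟨ℓ j, y⟩))), fun p => ?_⟩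
    have h1 := hz (some ⟨j, p⟩)
    simp only [cellCheck] at h1
    convert h1 using 2
    funext i
    rcases i with i | i <;> rfl
  obtain ⟨a, had, haf⟩ := exists_approx_disjunction (S := Fin c → Bool)
    (Q := fun ℓ => Option (Σ j, P (ℓ j))) (C := fun ℓ => cellCheck chk ℓ) (c := c)
    (M := c * M + 1) (s := s) (by simp) (by omega)
    (by
      intro ℓ
      rw [Fintype.card_option, Fintype.card_sigma]
      refine Nat.add_le_add_right ((Finset.sum_le_card_nsmul _ _ M fun j _ => hM (ℓ j)).trans ?_) 1
      simp)
    (by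
      rintro ℓ (_ | ⟨j, p⟩)
      · exact (BDeg.var _).mono hs
      · exact (hdeg (ℓ j) p).comap (certPos ℓ j))
    (by
      intro z ℓ ℓ' hz hz'
      funext j
      rw [← hvalid z ℓ hz j, ← hvalid z ℓ' hz' j])
  let N := CellIdx Y c I ⊕ Fin t
  let par : (Fin t → Bool) → Bool := fun y => ofProp (∏ i, (1 - 2 * bit (y i)) = -1)
  have hpar : ∀ y : Fin t → Bool, 1 - 2 * bit (par y) = ∏ i, (1 - 2 * bit (y i)) := by
    intro y
    have h1 : ∏ i, (1 - 2 * bit (y i)) = 1 ∨ ∏ i, (1 - 2 * bit (y i)) = -1 := by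
      refine Finset.prod_induction _ (fun r : ℝ => r = 1 ∨ r = -1) ?_ (Or.inl rfl) ?_
      · rintro a b (rfl | rfl) (rfl | rfl) <;> norm_num
      · intro i _
        cases y i <;> simp [bit]
        norm_num
    rcases h1 with h1 | h1
    · have : par y = false := by
        refine ofProp_eq_false_iff.2 ?_
        rw [h1]
        norm_num
      rw [this, h1]
      simp [bit]
    · have : par y = true := ofProp_eq_true_iff.2 h1
      rw [this, h1]
      norm_num [bit]
  let f : (N → Bool) → Bool := fun z => xor (f₀ fun i => z (Sum.inl i)) (par fun i => z (Sum.inr i))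
  have hfapp : BDeg (fun z : N → Bool => (1 + (-1) * ((1 + (-2) * a fun i => z (Sum.inl i)) *
      ∏ i, (1 + (-2) * bit (z (Sum.inr i))))) * (1 / 2)) (t + (c + 2) * (Nat.sqrt (c * M + 1) + 1) * s) := by
    have h1 : BDeg (fun z : N → Bool => ∏ i, (1 + (-2) * bit (z (Sum.inr i)))) (t * 1) := by
      have := BDeg.prod (Finset.univ : Finset (Fin t))
        (f := fun i (z : N → Bool) => 1 + (-2) * bit (z (Sum.inr i))) (d := 1) fun i _ =>
          ((BDeg.const 1).mono zero_le_one).add ((BDeg.const (-2)).mul (BDeg.var (Sum.inr i)))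
      simpa using this
    have h2 : BDeg (fun z : N → Bool => 1 + (-2) * a fun i => z (Sum.inl i))
        ((c + 2) * (Nat.sqrt (c * M + 1) + 1) * s) :=
      ((BDeg.const 1).mono (Nat.zero_le _)).add (by
        simpa using (BDeg.const (-2)).mul (had.comap (Sum.inl : _ → N)))
    have h3 := (((BDeg.const (I := N) 1).mono (Nat.zero_le _)).add
      ((BDeg.const (-1)).mul (h2.mul h1))).mul (BDeg.const (1 / 2))
    refine h3.mono (le_of_eq ?_)
    ring
  have hferr : ∀ z : N → Bool, |(1 + (-1) * ((1 + (-2) * a fun i => z (Sum.inl i)) *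
      ∏ i, (1 + (-2) * bit (z (Sum.inr i))))) * (1 / 2) - bit (f z)| ≤ 1 / 3 := by
    intro z
    have h1 := abs_bit_xor_sub (f₀ fun i => z (Sum.inl i)) (par fun i => z (Sum.inr i))
      (a fun i => z (Sum.inl i))
    rw [hpar] at h1
    have h2 := haf fun i => z (Sum.inl i)
    rw [← h1] at h2
    refine le_trans (le_of_eq ?_) (h2.trans (by norm_num))
    congr 2
    simp only [sub_eq_add_neg, neg_mul]
    ring
  refine ⟨Fintype.card N + 1, fun n hn => ?_⟩
  obtain ⟨ι⟩ : Nonempty (N ↪ Fin n) := by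
    rw [Function.Embedding.nonempty_iff_card_le, Fintype.card_fin]
    omega
  refine ⟨fun z => f fun i => z (ι i), ?_, ?_, ?_⟩
  · have h1 := card_le_adegq_lift (g := fun z : Fin n → Bool => f fun i => z (ι i))
      (T := Finset.univ.map ((Function.Embedding.inr : Fin t ↪ N).trans ι)) (by
          intro i' hi' z
          obtain ⟨i, -, rfl⟩ := Finset.mem_map.1 hi'
          simp only [Function.Embedding.trans_apply, Function.Embedding.inr_apply]
          have e1 : (fun j => flip (ι (Sum.inr i)) z (ι j)) = flip (Sum.inr i) fun j => z (ι j) := by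
            funext j
            by_cases hj : j = Sum.inr i
            · subst hj
              simp [flip]
            · rw [flip, flip, Function.update_of_ne (fun h => hj (ι.injective h)),
                Function.update_of_ne hj]
          rw [e1]
          generalize (fun j => z (ι j)) = z'
          have e2 : (fun j => flip (Sum.inr i) z' (Sum.inl j)) = fun j => z' (Sum.inl j) := by
            funext j
            simp [flip]
          have e3 : (fun j => flip (Sum.inr i) z' (Sum.inr j)) = flip i fun j => z' (Sum.inr j) := by
            funext j
            by_cases hj : j = i
            · subst hj
              simp [flip]
            · simp [flip, hj]
          simp only [f, e2, e3]
          generalize (fun j => z' (Sum.inr j)) = y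
          have e4 : par (flip i y) = !par y := by
            have e5 : 1 - 2 * bit (par (flip i y)) = - (1 - 2 * bit (par y)) := by
              rw [hpar, hpar, ← Finset.mul_prod_erase _ _ (Finset.mem_univ i),
                ← Finset.mul_prod_erase Finset.univ (fun i => 1 - 2 * bit (y i))
                  (Finset.mem_univ i)]
              have e6 : ∏ x ∈ Finset.univ.erase i, (1 - 2 * bit (flip i y x)) =
                  ∏ x ∈ Finset.univ.erase i, (1 - 2 * bit (y x)) := by
                refine Finset.prod_congr rfl fun x hx => ?_
                rw [flip, Function.update_of_ne (Finset.ne_of_mem_erase hx)]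
              rw [e6, flip, Function.update_self]
              cases y i <;> simp [bit] <;> ring
            cases h1 : par (flip i y) <;> cases h2 : par y <;> simp [h1, h2, bit] at e5 ⊢ <;>
              norm_num at e5
          rw [e4]
          simp)
    simpa using h1
  · exact adegq_lift_le (hfapp.comap ι) fun z => hferr fun i => z (ι i)
  · intro μ hμL hμh
    have hμ0 : 0 < μ := lt_of_lt_of_le (by positivity) hμL
    have hcertb : ∀ b x, ∃ y : Y b → Bool, F x = b → ∀ p, chk b p (Sum.elim x y) = true := by
      intro b x
      by_cases hb : F x = b
      · obtain ⟨y, hy⟩ := (hcert b x).1 hb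
        exact ⟨y, fun _ => hy⟩
      · exact ⟨fun _ => false, fun h => absurd h hb⟩
    choose cert hcertv using hcertb
    let fill : (Fin c → Bool) × (Fin c → S.A) → Unit ⊕ Fin c × (Σ b, Y b) → Bool := fun r =>
      Sum.elim (fun _ => true) fun q => cert q.2.1 (S.X (r.1 q.1) (r.2 q.1)) q.2.2
    let X : (Fin c → Bool) × (Fin c → S.A) → N → Bool := fun r =>
      Sum.elim (Sum.elim (fun q => S.X (r.1 q.1) (r.2 q.1) q.2)
        fun q => if q.1 = r.1 then fill r q.2 else false) fun _ => false
    let Z : (Fin c → Bool) × (Fin c → S.A) → N → Bool := fun r =>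
      Sum.elim (Sum.elim (fun q => S.X (r.1 q.1) (r.2 q.1) q.2) fun _ => false) fun _ => false
    let β : ℝ := (1 / 2) ^ h
    have hβ0 : 0 < β := by positivity
    have hβc : (Fintype.card (Fin c → Bool) : ℝ) * β ^ 2 = 1 := by
      simp only [Fintype.card_fun, Fintype.card_bool, Fintype.card_fin, β, hc]
      push_cast
      rw [← pow_mul, mul_comm h 2, ← mul_pow]
      norm_num
    let B : (Fin c → Bool) → (Fin c → Bool) → ℝ := fun _ _ => β ^ 2
    have hB : OpBound B 1 := by
      refine OpBound.schur (fun r => ?_) fun r => ?_ <;>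
      · simp only [B, abs_of_pos (pow_pos hβ0 2), Finset.sum_const, Finset.card_univ, nsmul_eq_mul]
        exact hβc.le
    have hBd : ∀ j, OpBound (diffPart (fun ℓ : Fin c → Bool => ℓ) (fun ℓ => ℓ) B j) 1 := by
      intro j
      have hle : ∀ r c', |diffPart (fun ℓ : Fin c → Bool => ℓ) (fun ℓ => ℓ) B j r c'| ≤ β ^ 2 := by
        intro r c'
        unfold diffPart
        split_ifs
        · simp only [abs_zero]
          positivity
        · exact (abs_of_pos (pow_pos hβ0 2)).le
      refine OpBound.schur (fun r => ?_) fun r => ?_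
      · refine (Finset.sum_le_sum fun c' _ => hle r c').trans ?_
        simp only [Finset.sum_const, Finset.card_univ, nsmul_eq_mul]
        exact hβc.le
      · refine (Finset.sum_le_sum fun c' _ => hle c' r).trans ?_
        simp only [Finset.sum_const, Finset.card_univ, nsmul_eq_mul]
        exact hβc.le
    have hunorm : ∑ _ℓ : Fin c → Bool, β ^ 2 = 1 := by
      simp only [Finset.sum_const, Finset.card_univ, nsmul_eq_mul]
      exact hβc
    have huB : ∑ r, ∑ c', B r c' * (β * β) = 1 := by
      simp only [B]
      rw [← hunorm]
      refine Finset.sum_congr rfl fun r _ => ?_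
      rw [Finset.sum_const, Finset.card_univ, nsmul_eq_mul, ← mul_assoc, hβc, one_mul, pow_two]
    have hpar0 : par (fun _ => false) = false := by
      refine ofProp_eq_false_iff.2 ?_
      simp [bit]
      norm_num
    refine one_le_Qq_lift (by omega) ι.injective (X := X) (Y := Z)
      (K := S.comp B (fun ℓ => ℓ) fun ℓ => ℓ) ?_ ?_ (S.comp_bound hB)
      (u := S.vec (fun ℓ => ℓ) fun _ => β) (v := S.vec (fun ℓ => ℓ) fun _ => β)
      (S.sum_vec_sq _ hunorm) (S.sum_vec_sq _ hunorm) (S.comp_attained huB) ?_ hμ0.le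
    · intro r
      have h1 : f₀ (fun i => X r (Sum.inl i)) = true := by
        refine ofProp_eq_true_iff.2 ⟨r.1, ?_⟩
        rintro (_ | ⟨j, p⟩)
        · simp [cellCheck, X, fill]
        · have h2 := hcertv (r.1 j) (S.X (r.1 j) (r.2 j)) (hSX _ _) p
          simp only [cellCheck]
          convert h2 using 2
          funext i
          rcases i with i | i <;> simp [certPos, X, fill]
      have h2 : par (fun i => X r (Sum.inr i)) = false := hpar0
      simp only [f, h1, h2]
      rfl
    · intro r
      have h1 : f₀ (fun i => Z r (Sum.inl i)) = false := by
        refine ofProp_eq_false_iff.2 ?_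
        rintro ⟨ℓ, hℓ⟩
        have := hℓ none
        simp [cellCheck, Z] at this
      have h2 : par (fun i => Z r (Sum.inr i)) = false := hpar0
      simp only [f, h1, h2]
      rfl
    · rintro ((⟨j, i⟩ | ⟨ℓ₀, q⟩) | i)
      · exact (S.comp_diff hL (hBd j) i).mono hμL
      · have h1 := ((S.comp_bound (X := fun ℓ => ℓ) (Y := fun ℓ => ℓ)
          (OpBound.single_row (R := Fin c → Bool) hβ0 hβc ℓ₀)).restrict_rows hβ0.le
            fun r => fill r q).mono hμh
        convert h1 using 1
        funext r c'
        simp only [diffPart, X, Z, AdvSys.comp, Sum.elim_inl, Sum.elim_inr, B]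
        by_cases hr : ℓ₀ = r.1
        · rw [if_pos hr, if_pos hr.symm]
          cases fill r q <;> simp
        · rw [if_neg hr, if_neg (Ne.symm hr)]
          simp
      · intro p q
        simp only [diffPart, X, Z, Sum.elim_inr, if_true, zero_mul, Finset.sum_const_zero, mul_zero]
        positivity

end CheatSheet

end QC

/-! ### Choice of parameters -/

namespace QC

lemma eventually_mul_pow_le_two_pow (C D : ℕ) : ∀ᶠ a : ℕ in Filter.atTop, C * a ^ D ≤ 2 ^ a := by
  have h := tendsto_pow_const_div_const_pow_of_one_lt D (one_lt_two (α := ℝ))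
  have h1 : (0 : ℝ) < 1 / (C + 1) := by positivity
  filter_upwards [h.eventually_lt_const h1] with a ha
  rw [div_lt_div_iff₀ (by positivity) (by positivity)] at ha
  have h2 : ((C * a ^ D : ℕ) : ℝ) ≤ ((2 ^ a : ℕ) : ℝ) := by
    push_cast
    have : (0 : ℝ) ≤ (a : ℝ) ^ D := by positivity
    nlinarith
  exact_mod_cast h2

/-- The degree bound is a polynomial in `a` times a fixed power of `2 ^ a`. -/
lemma degree_bound (κ t : ℕ) : ∃ C D : ℕ, ∀ a x h u : ℕ, 1 ≤ a → 1 ≤ x → h = 2 * a * (2 * κ) ^ 2 →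
    u = 2 * (2 * κ) ^ 2 * (1 + a * ((2 * κ + 1) * (2 * κ))) ^ 2 → 1 ≤ u →
    t + (2 * h + 2) * (Nat.sqrt (2 * h * (u * x ^ (2 * κ + 1)) ^ (2 * κ) + 1) + 1) *
      (1 + 2 * (2 * κ) * (u * x ^ (2 * κ + 1))) ≤
      (C * a ^ D) * x ^ ((κ + 1) * (2 * κ + 1)) := by
  set U := 2 * (2 * κ) ^ 2 * (1 + (2 * κ + 1) * (2 * κ)) ^ 2 with hU
  set H := 4 * (2 * κ) ^ 2 + 2 with hH
  refine ⟨t + H * (2 * H * U ^ (2 * κ)) * ((1 + 4 * κ) * U), 2 + 4 * κ + 2,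
    fun a x h u ha hx hh hu hu1 => ?_⟩
  have hH1 : 2 * h + 2 ≤ H * a := by
    rw [hh, hH]
    nlinarith
  have hu2 : u ≤ U * a ^ 2 := by
    have h1 : 1 + a * ((2 * κ + 1) * (2 * κ)) ≤ (1 + (2 * κ + 1) * (2 * κ)) * a := by nlinarith
    calc u ≤ 2 * (2 * κ) ^ 2 * ((1 + (2 * κ + 1) * (2 * κ)) * a) ^ 2 := by
          rw [hu]
          gcongr
      _ = U * a ^ 2 := by
          rw [hU]
          ring
  have hM : (u * x ^ (2 * κ + 1)) ^ (2 * κ) = u ^ (2 * κ) * (x ^ (κ * (2 * κ + 1))) ^ 2 := by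
    rw [mul_pow, ← pow_mul, ← pow_mul]
    congr 2
    ring
  have hsq : Nat.sqrt (2 * h * (u * x ^ (2 * κ + 1)) ^ (2 * κ) + 1) + 1 ≤
      2 * ((H * a) * (U * a ^ 2) ^ (2 * κ)) * x ^ (κ * (2 * κ + 1)) := by
    set q := x ^ (κ * (2 * κ + 1)) with hq
    have hq1 : 1 ≤ q := Nat.one_le_pow _ _ hx
    have hp1 : 1 ≤ u ^ (2 * κ) := Nat.one_le_pow _ _ hu1
    set v := (2 * h + 1) * u ^ (2 * κ) with hv
    have hv1 : 1 ≤ v := Nat.mul_pos (by omega) hp1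
    have h1 : 2 * h * (u * x ^ (2 * κ + 1)) ^ (2 * κ) + 1 ≤ (v * q) * (v * q) := by
      rw [hM]
      have h2 : 1 ≤ u ^ (2 * κ) * q ^ 2 := Nat.mul_pos hp1 (pow_pos hq1 2)
      calc 2 * h * (u ^ (2 * κ) * q ^ 2) + 1 ≤ v * q ^ 2 := by
            rw [hv]
            nlinarith
        _ ≤ v * (v * q ^ 2) := by
            rw [← mul_assoc]
            exact Nat.mul_le_mul_right _ (Nat.le_mul_of_pos_left _ hv1)
        _ = (v * q) * (v * q) := by ring
    have h2 : Nat.sqrt (2 * h * (u * x ^ (2 * κ + 1)) ^ (2 * κ) + 1) ≤ v * q := by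
      refine (Nat.sqrt_le_sqrt h1).trans ?_
      rw [Nat.sqrt_eq]
    have h3 : v ≤ (H * a) * (U * a ^ 2) ^ (2 * κ) := by
      rw [hv]
      exact Nat.mul_le_mul (by omega) (Nat.pow_le_pow_left hu2 _)
    have h4 : 1 ≤ v * q := Nat.mul_pos hv1 hq1
    calc _ ≤ 2 * v * q := by
          rw [mul_assoc 2 v q]
          omega
      _ ≤ _ := by gcongr
  have hs : 1 + 2 * (2 * κ) * (u * x ^ (2 * κ + 1)) ≤
      ((1 + 4 * κ) * (U * a ^ 2)) * x ^ (2 * κ + 1) := by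
    have h1 : 1 ≤ u * x ^ (2 * κ + 1) := Nat.mul_pos hu1 (pow_pos hx _)
    calc 1 + 2 * (2 * κ) * (u * x ^ (2 * κ + 1)) ≤ (1 + 4 * κ) * (u * x ^ (2 * κ + 1)) := by
          nlinarith
      _ ≤ (1 + 4 * κ) * ((U * a ^ 2) * x ^ (2 * κ + 1)) := by gcongr
      _ = _ := by ring
  have ht : t ≤ t * (a ^ (2 + 4 * κ + 2) * x ^ ((κ + 1) * (2 * κ + 1))) :=
    Nat.le_mul_of_pos_right _ (Nat.mul_pos (pow_pos ha _) (pow_pos hx _))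
  have hmain := Nat.mul_le_mul (Nat.mul_le_mul hH1 hsq) hs
  have e : H * a * (2 * ((H * a) * (U * a ^ 2) ^ (2 * κ)) * x ^ (κ * (2 * κ + 1))) *
      (((1 + 4 * κ) * (U * a ^ 2)) * x ^ (2 * κ + 1)) =
      (H * (2 * H * U ^ (2 * κ)) * ((1 + 4 * κ) * U)) *
        (a ^ (2 + 4 * κ + 2) * x ^ ((κ + 1) * (2 * κ + 1))) := by
    have e1 : x ^ ((κ + 1) * (2 * κ + 1)) = x ^ (κ * (2 * κ + 1)) * x ^ (2 * κ + 1) := by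
      rw [← pow_add]
      congr 1
      ring
    have e2 : a ^ (2 + 4 * κ + 2) = a * a * (a ^ 2) ^ (2 * κ) * a ^ 2 := by
      rw [← pow_mul]
      ring
    rw [e1, e2, mul_pow]
    ring
  rw [e] at hmain
  calc _ ≤ t * (a ^ (2 + 4 * κ + 2) * x ^ ((κ + 1) * (2 * κ + 1))) +
        (H * (2 * H * U ^ (2 * κ)) * ((1 + 4 * κ) * U)) *
          (a ^ (2 + 4 * κ + 2) * x ^ ((κ + 1) * (2 * κ + 1))) := add_le_add ht hmain
    _ = _ := by ring

lemma exists_near_quartic_gap {δ : ℝ} (hδ : 0 < δ) (hδ1 : δ ≤ 1) (t : ℕ) :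
    ∃ N₀, ∀ n, N₀ ≤ n → ∃ g : (Fin n → Bool) → Bool, t ≤ adegq (lift g) ∧
      (adegq (lift g) : ℝ) ^ (4 - δ) ≤ (Qq (lift g) : ℝ) := by
  obtain ⟨κ, hκ⟩ := exists_nat_gt (21 / (2 * δ))
  have hκ0 : (0 : ℝ) < κ := lt_trans (by positivity) hκ
  have hκ1 : 1 ≤ κ := by exact_mod_cast hκ0
  obtain ⟨C, D, hCD⟩ := degree_bound κ t
  obtain ⟨a, ha, ha1, ha2⟩ := ((eventually_mul_pow_le_two_pow C D).and
    ((Filter.eventually_ge_atTop 1).and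
      (eventually_mul_pow_le_two_pow (40 * (4 * κ) ^ (4 * κ)) 0))).exists
  rw [pow_zero, mul_one] at ha2
  set x := 2 ^ a with hx
  have hx1 : 1 ≤ x := Nat.one_le_two_pow
  set w := 1 + a * ((2 * κ + 1) * (2 * κ)) with hw
  set u := 2 * (2 * κ) ^ 2 * w ^ 2 with hu
  have hu1 : 1 ≤ u := by
    rw [hu]
    have : 0 < w := by omega
    exact Nat.succ_le_of_lt (by positivity)
  obtain ⟨I, _, F, hA, hC⟩ := exists_adv_cert (k := 2 * κ) (m := x) (w := w) (by omega) hx1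
    (by omega) (by
      rw [hx, hw, ← pow_mul, pow_add, pow_one]) (2 * κ)
  have hx1' : (1 : ℝ) ≤ x := by exact_mod_cast hx1
  have hx0' : (0 : ℝ) < x := by linarith
  set L : ℝ := ((x : ℝ) ^ (2 * κ) / (2 * ((2 * κ : ℕ) : ℝ))) ^ (2 * (2 * κ)) with hL
  have hL0 : 0 < L := by positivity
  have hLe : L = (x : ℝ) ^ (8 * κ ^ 2) / (4 * κ) ^ (4 * κ) := by
    rw [hL, div_pow, ← pow_mul]
    push_cast
    congr 2 <;> ring
  set h := 2 * a * (2 * κ) ^ 2 with hh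
  obtain ⟨N₀, hN₀⟩ := exists_cheatSheet hL0 hA hC (by omega) h t
  refine ⟨N₀, fun n hn => ?_⟩
  obtain ⟨g, hg1, hg2, hg3⟩ := hN₀ n hn
  refine ⟨g, hg1, ?_⟩
  have hbound := hg2.trans (hCD a x h u ha1 hx1 hh hu hu1)
  have hdeg : adegq (lift g) ≤ x ^ (2 * κ ^ 2 + 3 * κ + 2) := by
    refine hbound.trans ((Nat.mul_le_mul_right _ ha).trans (le_of_eq ?_))
    rw [← pow_succ']
    congr 1
    ring
  have hQ : L ≤ 40 * Qq (lift g) := by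
    have h1 := hg3 (1 / L) le_rfl (by
      rw [one_div_pow]
      refine one_div_le_one_div_of_le hL0 ?_
      have h2 : (2 : ℝ) ^ h = (x : ℝ) ^ (8 * κ ^ 2) := by
        rw [hx]
        push_cast
        rw [← pow_mul]
        congr 1
        rw [hh]
        ring
      rw [h2, hLe]
      refine div_le_self (by positivity) (one_le_pow₀ ?_)
      have : (1 : ℝ) ≤ κ := by exact_mod_cast hκ1
      linarith)
    rw [mul_one_div, div_mul_eq_mul_div, one_le_div hL0] at h1
    exact h1
  have hQ' : (x : ℝ) ^ (8 * κ ^ 2 - 1) ≤ Qq (lift g) := by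
    have h1 : (40 : ℝ) * (4 * κ) ^ (4 * κ) ≤ x := by exact_mod_cast ha2
    have h2 : (x : ℝ) ^ (8 * κ ^ 2) = x ^ (8 * κ ^ 2 - 1) * x := by
      rw [← pow_succ]
      congr 1
      have : 0 < 8 * κ ^ 2 := by positivity
      omega
    rw [hLe, div_le_iff₀ (by positivity), h2] at hQ
    have h3 := (mul_le_mul_of_nonneg_left h1
      (pow_nonneg hx0'.le (8 * κ ^ 2 - 1))).trans hQ
    have h4 : (0 : ℝ) < 40 * (4 * κ) ^ (4 * κ) := by positivity
    refine le_of_mul_le_mul_right (h3.trans (le_of_eq ?_)) h4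
    ring
  refine le_trans ?_ hQ'
  have hdeg' : (adegq (lift g) : ℝ) ≤ (x : ℝ) ^ (2 * κ ^ 2 + 3 * κ + 2) := by exact_mod_cast hdeg
  refine (Real.rpow_le_rpow (Nat.cast_nonneg _) hdeg' (by linarith)).trans ?_
  rw [← Real.rpow_natCast, ← Real.rpow_natCast, ← Real.rpow_mul hx0'.le]
  refine Real.rpow_le_rpow_of_exponent_le hx1' ?_
  have hκ1' : (1 : ℝ) ≤ κ := by exact_mod_cast hκ1
  rw [Nat.cast_sub (by nlinarith)]
  push_cast
  rw [div_lt_iff₀ (by positivity)] at hκ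
  nlinarith [mul_pos hδ hκ0]

end QC

namespace QC

lemma adegq_lift_false (n : ℕ) : adegq (lift fun _ : Fin n → Bool => false) = 0 := by
  refine Nat.le_zero.1 (adegq_lift_le (BDeg.const 0) fun z => ?_)
  simp [bit]

end QC

/-- There is a family of total Boolean functions with
`Q(f) ≥ adeg(f)^{4 - o(1)}`. -/
theorem quantum_vs_approx_degree_power_four :
    ∃ f : ∀ n : ℕ, QC.PartialFn (Fin n) (fun _ => 2),
      (∀ n, QC.TotalFn (f n)) ∧
      Filter.Tendsto (fun n => QC.adegq (f n)) Filter.atTop Filter.atTop ∧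
      ∃ ε : ℕ → ℝ, Filter.Tendsto ε Filter.atTop (nhds 0) ∧
        ∀ n : ℕ, (QC.adegq (f n) : ℝ) ^ ((4 : ℝ) - ε n) ≤ (QC.Qq (f n) : ℝ) := by
  have hδ : ∀ j : ℕ, (1 : ℝ) / (j + 1) ≤ 1 := fun j => by
    rw [div_le_one (by positivity)]
    linarith [Nat.cast_nonneg (α := ℝ) j]
  choose N hN using fun j : ℕ => QC.exists_near_quartic_gap (δ := 1 / ((j : ℝ) + 1))
    (by positivity) (hδ j) j
  let J : ℕ → ℕ := fun n => Nat.findGreatest (fun j => N j ≤ n) n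
  have hJ : Filter.Tendsto J Filter.atTop Filter.atTop := by
    refine Filter.tendsto_atTop.2 fun j => ?_
    filter_upwards [Filter.eventually_ge_atTop (max j (N j))] with n hn
    exact Nat.le_findGreatest ((le_max_left _ _).trans hn) ((le_max_right _ _).trans hn)
  have hg : ∀ n, ∃ g : (Fin n → Bool) → Bool, (N 0 ≤ n → J n ≤ QC.adegq (QC.lift g)) ∧
      (QC.adegq (QC.lift g) : ℝ) ^ ((4 : ℝ) - 1 / ((J n : ℝ) + 1)) ≤ (QC.Qq (QC.lift g) : ℝ) := by
    intro n
    by_cases h0 : N 0 ≤ n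
    · have h1 : N (J n) ≤ n := Nat.findGreatest_spec (P := fun j => N j ≤ n) (Nat.zero_le n) h0
      obtain ⟨g, hg1, hg2⟩ := hN (J n) n h1
      exact ⟨g, fun _ => hg1, hg2⟩
    · refine ⟨fun _ => false, fun h => absurd h h0, ?_⟩
      rw [QC.adegq_lift_false, Nat.cast_zero, Real.zero_rpow]
      · exact Nat.cast_nonneg _
      · have := hδ (J n)
        intro h
        linarith
  choose g hg1 hg2 using hg
  refine ⟨fun n => QC.lift (g n), fun n x => by simp [QC.lift], ?_,
    fun n => 1 / ((J n : ℝ) + 1), ?_, hg2⟩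
  · refine Filter.tendsto_atTop_mono' _ ?_ hJ
    filter_upwards [Filter.eventually_ge_atTop (N 0)] with n hn
    exact hg1 n hn
  · exact tendsto_one_div_add_atTop_nhds_zero_nat.comp hJ
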